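/- arXiv:0812.1318 — 8 statements merged into one kernel-verified Lean document; each statement's English description precedes it below -/
import Mathlib

section
/- Fix an integer k ≥ 0 and set k̄ = k+2. For all (a,c), (a',c'), (α,γ) ∈ Q_k (with c, c', γ represented by integers), the Verlinde sum N_{ac;a'c'}^{αγ} := Σ_{(d,f)∈Q_k} S_{a,c;d,f}·S_{a',c';d,f}·conj(S_{α,γ;d,f}) / S_{0,0;d,f} satisfies: (i) if [a+c]·[a'+c'] = 0 then N_{ac;a'c'}^{αγ} = N^{su2}(α; a,a')·δ(c+c' ≡ γ mod 2k̄); (ii) if [a+c]·[a'+c'] = 1 then N_{ac;a'c'}^{αγ} = N^{su2}(k−α; a,a')·δ(c+c' ≡ γ+k̄ mod 2k̄). Here δ(cond) = 1 if the condition holds and 0 otherwise. -/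
/-- Parity `[x] ∈ {0,1}` of an integer. -/
def par (x : ℤ) : ℤ := x % 2

/-- The level-`k` su(2) S-matrix. -/
noncomputable def Ssu2 (k : ℕ) (a a' : ℤ) : ℂ :=
  ((Real.sqrt (2 / ((k : ℝ) + 2)) *
      Real.sin (Real.pi * ((a : ℝ) + 1) * ((a' : ℝ) + 1) / ((k : ℝ) + 2)) : ℝ) : ℂ)

/-- The level-`l` u(1) S-matrix. -/
noncomputable def Su1 (l : ℕ) (c c' : ℤ) : ℂ :=
  ((1 / Real.sqrt (2 * (l : ℝ)) : ℝ) : ℂ) *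
    Complex.exp (-(Real.pi : ℂ) * Complex.I * (c : ℂ) * (c' : ℂ) / (l : ℂ))

/-- The N=2 minimal model S-matrix at level `k`. -/
noncomputable def Smin (k : ℕ) (a c a' c' : ℤ) : ℂ :=
  2 * Ssu2 k a a' * Su1 2 (par (a + c)) (par (a' + c')) *
    (starRingEnd ℂ) (Su1 (k + 2) c c')

/-- The su(2) level-`k` fusion number `N^{su2}(l; a, a')`, as a complex number. -/
noncomputable def Nsu2 (k : ℕ) (l a a' : ℤ) : ℂ :=
  if |a - a'| ≤ l ∧ l ≤ min (a + a') (2 * (k : ℤ) - a - a') ∧ (a + a' + l) % 2 = 0 then 1 else 0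

/-!
Write `N = k + 2`. The S-matrix is `S = (-i)^{[a+c][d+f]} T`, where `T` is the S-matrix of
`su(2)_k ⊗ u(1)_N` (the `u(1)` factor conjugated), whose Verlinde sum is the product of the `su(2)`
and `u(1)` fusion numbers. On a Verlinde summand the phases combine to `ω ^ [d+f]` with
`ω = (-i)^{[a+c]+[a'+c']-[α+γ]}`, that is, to `(1 + ω) / 2 + (1 - ω) / 2 * (-1) ^ (d + f)`. The sign
`(-1) ^ (d + f)` is absorbed by the simple current `(α, γ) ↦ (k - α, γ + N)` of `T`. The selection
rules of the fusion numbers kill both terms unless the exponent of `ω` is even, and then `ω = 1`,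
except when `[a+c] = [a'+c'] = 1`, where `ω = -1`.
-/

section FourierSums

open Finset

theorem sum_range_zpow_pow_of_isPrimitiveRoot {K : Type*} [Field K] {ζ : K} {n : ℕ}
    (hζ : IsPrimitiveRoot ζ n) (j : ℤ) :
    ∑ i ∈ range n, (ζ ^ j) ^ i = if (n : ℤ) ∣ j then (n : K) else 0 := by
  split_ifs with h
  · simp [(hζ.zpow_eq_one_iff_dvd j).2 h]
  · have hpow : (ζ ^ j) ^ n = 1 := by
      rw [← zpow_natCast, zpow_comm, zpow_natCast, hζ.pow_eq_one, one_zpow]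
    rw [geom_sum_eq (mt (hζ.zpow_eq_one_iff_dvd j).1 h), hpow, sub_self, zero_div]

theorem sum_range_exp_two_pi_mul_I_mul_div {n : ℕ} (hn : n ≠ 0) (j : ℤ) :
    ∑ x ∈ range n, Complex.exp (2 * Real.pi * Complex.I * j * x / n) =
      if (n : ℤ) ∣ j then (n : ℂ) else 0 := by
  rw [← sum_range_zpow_pow_of_isPrimitiveRoot (Complex.isPrimitiveRoot_exp n hn) j]
  refine sum_congr rfl fun x _ ↦ ?_
  rw [← Complex.exp_int_mul, ← Complex.exp_nat_mul]
  congr 1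
  ring

theorem sum_range_cos_two_pi_mul_div {n : ℕ} (hn : n ≠ 0) (j : ℤ) :
    ∑ x ∈ range n, Real.cos (2 * Real.pi * j * x / n) = if (n : ℤ) ∣ j then (n : ℝ) else 0 := by
  have hre := congrArg Complex.re (sum_range_exp_two_pi_mul_I_mul_div hn j)
  rw [Complex.re_sum, apply_ite Complex.re, Complex.natCast_re, Complex.zero_re] at hre
  rw [← hre]
  refine sum_congr rfl fun x _ ↦ ?_
  rw [← Complex.exp_ofReal_mul_I_re]
  congr 2
  push_cast
  ring

theorem sum_range_two_mul_of_reflect {M : Type*} [AddCommGroup M] {N : ℕ} {f : ℕ → M}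
    (hf : ∀ m n, m + n = 2 * N → f m = f n) (h0 : f 0 = f N) :
    ∑ n ∈ range (2 * N), f n = 2 • ∑ n ∈ range N, f n := by
  have hshift : ∑ n ∈ range N, f (n + 1) = ∑ n ∈ range N, f n := by
    rw [← add_left_inj (f 0), ← sum_range_succ', sum_range_succ, h0]
  have hupper : ∑ n ∈ range N, f (N + n) = ∑ n ∈ range N, f n := by
    rw [← sum_range_reflect, ← hshift]
    refine sum_congr rfl fun n hn ↦ hf _ _ ?_
    have := mem_range.1 hn
    omega
  rw [two_mul, sum_range_add, hupper, two_nsmul]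

theorem sum_range_two_mul_sin_mul_sin {N : ℕ} (hN : N ≠ 0) (m l : ℤ) :
    ∑ n ∈ range (2 * N), Real.sin (Real.pi * m * n / N) * Real.sin (Real.pi * l * n / N) =
      N * ((if (2 * N : ℤ) ∣ m - l then 1 else 0) - (if (2 * N : ℤ) ∣ m + l then 1 else 0)) := by
  have hcos (n : ℕ) : Real.sin (Real.pi * m * n / N) * Real.sin (Real.pi * l * n / N) =
      (Real.cos (2 * Real.pi * (m - l : ℤ) * n / (2 * N : ℕ)) -
        Real.cos (2 * Real.pi * (m + l : ℤ) * n / (2 * N : ℕ))) / 2 := by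
    rw [eq_div_iff two_ne_zero, mul_comm, ← mul_assoc, Real.two_mul_sin_mul_sin]
    congr 2 <;> push_cast <;> field_simp
  have h2N : 2 * N ≠ 0 := mul_ne_zero two_ne_zero hN
  simp only [hcos]
  rw [← sum_div, sum_sub_distrib, sum_range_cos_two_pi_mul_div h2N,
    sum_range_cos_two_pi_mul_div h2N]
  push_cast
  split_ifs <;> ring

theorem sum_range_sin_mul_sin {N : ℕ} (hN : N ≠ 0) (m l : ℤ) :
    ∑ n ∈ range N, Real.sin (Real.pi * m * n / N) * Real.sin (Real.pi * l * n / N) =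
      N / 2 * ((if (2 * N : ℤ) ∣ m - l then 1 else 0) -
        (if (2 * N : ℤ) ∣ m + l then 1 else 0)) := by
  have hN' : (N : ℝ) ≠ 0 := Nat.cast_ne_zero.2 hN
  have hreflect (j : ℤ) (x y : ℕ) (hxy : x + y = 2 * N) :
      Real.sin (Real.pi * j * x / N) = -Real.sin (Real.pi * j * y / N) := by
    have hx : (x : ℝ) = 2 * N - y := by rw [eq_sub_iff_add_eq]; exact_mod_cast hxy
    rw [← Real.sin_int_mul_two_pi_sub _ j, hx]
    congr 1
    field_simp
  have hendpoint (j : ℤ) : Real.sin (Real.pi * j * N / N) = 0 := by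
    rw [mul_div_cancel_right₀ _ hN', mul_comm]
    exact Real.sin_int_mul_pi j
  have hfull := sum_range_two_mul_of_reflect (N := N)
    (f := fun n ↦ Real.sin (Real.pi * m * n / N) * Real.sin (Real.pi * l * n / N))
    (fun x y hxy ↦ by simp only [hreflect _ x y hxy, neg_mul_neg]) (by simp [hendpoint])
  rw [sum_range_two_mul_sin_mul_sin hN, nsmul_eq_mul] at hfull
  push_cast at hfull
  linarith

theorem sin_mul_sum_range_sin (θ x : ℝ) (n : ℕ) :
    Real.sin θ * ∑ i ∈ range n, Real.sin (x + 2 * i * θ) =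
      Real.sin (n * θ) * Real.sin (x + (n - 1) * θ) := by
  have htelescope (i : ℕ) : 2 * Real.sin θ * Real.sin (x + 2 * i * θ) =
      Real.cos (x + (2 * i - 1) * θ) - Real.cos (x + (2 * (i + 1 : ℕ) - 1) * θ) := by
    rw [Real.two_mul_sin_mul_sin, ← Real.cos_neg (θ - _)]
    push_cast
    ring_nf
  rw [← mul_right_inj' (two_ne_zero (α := ℝ)), ← mul_assoc, mul_sum]
  simp only [htelescope]
  rw [sum_range_sub', ← mul_assoc, Real.two_mul_sin_mul_sin, ← Real.cos_neg (n * θ - _)]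
  push_cast
  ring_nf

end FourierSums

section SU2

open Finset ComplexConjugate

theorem conj_Ssu2 (k : ℕ) (a d : ℤ) : conj (Ssu2 k a d) = Ssu2 k a d :=
  Complex.conj_ofReal _

theorem Ssu2_zero_ne_zero {k d : ℕ} (hd : d ≤ k) : Ssu2 k 0 d ≠ 0 := by
  have hd' : (d : ℝ) + 1 < k + 2 := by exact_mod_cast (by omega : d + 1 < k + 2)
  have hsin : 0 < Real.sin (Real.pi * (d + 1) / (k + 2)) := by
    refine Real.sin_pos_of_pos_of_lt_pi (by positivity) ?_
    rw [div_lt_iff₀ (by positivity)]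
    gcongr
  have hsqrt : 0 < √(2 / ((k : ℝ) + 2)) := by positivity
  unfold Ssu2
  rw [Complex.ofReal_ne_zero]
  simpa using (mul_pos hsqrt hsin).ne'

theorem Ssu2_level_sub (k : ℕ) (a : ℤ) (d : ℕ) :
    Ssu2 k (k - a) d = (-1) ^ d * Ssu2 k a d := by
  have hsin : Real.sin (Real.pi * ((k - a : ℤ) + 1) * ((d : ℤ) + 1) / (k + 2)) =
      (-1) ^ d * Real.sin (Real.pi * (a + 1) * ((d : ℤ) + 1) / (k + 2)) := by
    have hpow : (-1 : ℝ) ^ d = -(-1) ^ (d + 1) := by ring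
    rw [hpow, neg_mul, ← Real.sin_nat_mul_pi_sub]
    congr 1
    push_cast
    field_simp
    ring
  unfold Ssu2
  rw [hsin]
  push_cast
  ring

theorem sum_Ssu2_mul_Ssu2 (k : ℕ) (a b : ℤ) :
    ∑ d ∈ range (k + 1), Ssu2 k a d * Ssu2 k b d =
      (if 2 * ((k : ℤ) + 2) ∣ a - b then 1 else 0) -
        (if 2 * ((k : ℤ) + 2) ∣ a + b + 2 then 1 else 0) := by
  have hsum := sum_range_sin_mul_sin (N := k + 2) (by omega) (a + 1) (b + 1)
  rw [sum_range_succ', add_sub_add_right_eq_sub, add_add_add_comm] at hsum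
  push_cast at hsum
  simp only [mul_zero, zero_div, Real.sin_zero, add_zero] at hsum
  have hsqrt : √(2 / ((k : ℝ) + 2)) * √(2 / ((k : ℝ) + 2)) = 2 / (k + 2) :=
    Real.mul_self_sqrt (by positivity)
  have hterm (d : ℕ) : Ssu2 k a d * Ssu2 k b d = ((2 / (k + 2) *
      (Real.sin (Real.pi * (a + 1) * (d + 1) / (k + 2)) *
        Real.sin (Real.pi * (b + 1) * (d + 1) / (k + 2))) : ℝ) : ℂ) := by
    rw [← hsqrt, ← mul_mul_mul_comm, Complex.ofReal_mul]
    rfl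
  simp only [hterm]
  rw [← Complex.ofReal_sum, ← mul_sum, hsum, ← mul_assoc, div_mul_div_cancel₀ (by positivity),
    div_self two_ne_zero, one_mul]
  split_ifs <;> norm_num

theorem Ssu2_mul_Ssu2 (k : ℕ) (a : ℤ) (b : ℕ) (d : ℤ) :
    Ssu2 k a d * Ssu2 k b d =
      Ssu2 k 0 d * ∑ i ∈ range (b + 1), Ssu2 k (a - b + 2 * i) d := by
  have hsin := sin_mul_sum_range_sin (Real.pi * (d + 1) / (k + 2))
    (Real.pi * (a - b + 1) * (d + 1) / (k + 2)) (b + 1)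
  have hangle_a : Real.pi * (a - b + 1) * (d + 1) / (k + 2) +
      ((b + 1 : ℕ) - 1) * (Real.pi * (d + 1) / (k + 2)) =
        Real.pi * (a + 1) * (d + 1) / (k + 2) := by
    push_cast
    ring
  have hangle_b : ((b + 1 : ℕ) : ℝ) * (Real.pi * (d + 1) / (k + 2)) =
      Real.pi * (b + 1) * (d + 1) / (k + 2) := by
    push_cast
    ring
  have hangle_sum (i : ℕ) : Real.pi * (a - b + 1) * (d + 1) / (k + 2) +
      2 * i * (Real.pi * (d + 1) / (k + 2)) =
        Real.pi * (a - b + 2 * i + 1) * (d + 1) / (k + 2) := by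
    ring
  simp only [hangle_a, hangle_b, hangle_sum] at hsin
  unfold Ssu2
  rw [← Complex.ofReal_mul, ← Complex.ofReal_sum, ← Complex.ofReal_mul, Complex.ofReal_inj,
    ← mul_sum]
  push_cast
  rw [zero_add, mul_one]
  linear_combination -√(2 / ((k : ℝ) + 2)) ^ 2 * hsin

theorem sum_range_ite_add_two_mul_eq {R : Type*} [AddCommMonoidWithOne R] (n : ℕ) (x y : ℤ) :
    ∑ i ∈ range (n + 1), (if x + 2 * i = y then (1 : R) else 0) =
      if x ≤ y ∧ y ≤ x + 2 * n ∧ (x + y) % 2 = 0 then 1 else 0 := by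
  split_ifs with h
  · obtain ⟨hxy, hyx, heven⟩ := h
    rw [sum_eq_single_of_mem ((y - x) / 2).toNat (by rw [mem_range]; omega)
      fun i _ hi ↦ if_neg (by omega), if_pos (by omega)]
  · refine sum_eq_zero fun i hi ↦ if_neg fun hiy ↦ h ?_
    rw [mem_range] at hi
    omega

theorem sum_ite_dvd_sub_ite_dvd_eq_Nsu2 {k a b : ℕ} {l : ℤ} (ha : a ≤ k) (hba : b ≤ a)
    (hl₀ : 0 ≤ l) (hlk : l ≤ k) :
    ∑ i ∈ range (b + 1), ((if 2 * ((k : ℤ) + 2) ∣ (a : ℤ) - b + 2 * i - l then (1 : ℂ) else 0) -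
        (if 2 * ((k : ℤ) + 2) ∣ (a : ℤ) - b + 2 * i + l + 2 then 1 else 0)) =
      Nsu2 k l a b := by
  have hdirect (i : ℕ) (hi : i ∈ range (b + 1)) :
      2 * ((k : ℤ) + 2) ∣ (a : ℤ) - b + 2 * i - l ↔ (a : ℤ) - b + 2 * i = l := by
    rw [mem_range] at hi
    refine ⟨fun h ↦ ?_, fun h ↦ by simp [h]⟩
    have := Int.eq_zero_of_abs_lt_dvd h (abs_lt.2 ⟨by omega, by omega⟩)
    omega
  have hreflected (i : ℕ) (hi : i ∈ range (b + 1)) :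
      2 * ((k : ℤ) + 2) ∣ (a : ℤ) - b + 2 * i + l + 2 ↔
        (a : ℤ) - b + 2 * i = 2 * k + 2 - l := by
    rw [mem_range] at hi
    refine ⟨fun h ↦ ?_, fun h ↦ ⟨1, by rw [h]; ring⟩⟩
    have := Int.eq_zero_of_abs_lt_dvd (dvd_sub_self_right.2 h) (abs_lt.2 ⟨by omega, by omega⟩)
    omega
  rw [sum_sub_distrib, sum_congr rfl fun i hi ↦ if_congr (hdirect i hi) rfl rfl,
    sum_congr rfl fun i hi ↦ if_congr (hreflected i hi) rfl rfl,
    sum_range_ite_add_two_mul_eq, sum_range_ite_add_two_mul_eq]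
  unfold Nsu2
  rw [abs_of_nonneg (by omega)]
  simp only [le_min_iff]
  split_ifs <;> first | omega | simp

theorem Nsu2_comm (k : ℕ) (l a b : ℤ) : Nsu2 k l a b = Nsu2 k l b a := by
  unfold Nsu2
  rw [abs_sub_comm, add_comm a, sub_right_comm]

theorem su2_verlinde {k a b : ℕ} {l : ℤ} (ha : a ≤ k) (hb : b ≤ k) (hl₀ : 0 ≤ l) (hlk : l ≤ k) :
    ∑ d ∈ range (k + 1), Ssu2 k a d * Ssu2 k b d * conj (Ssu2 k l d) / Ssu2 k 0 d =
      Nsu2 k l a b := by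
  wlog hba : b ≤ a generalizing a b
  · rw [Nsu2_comm, ← this hb ha (le_of_not_ge hba)]
    simp only [mul_comm (Ssu2 k a _)]
  have hexpand (d : ℕ) (hd : d ∈ range (k + 1)) :
      Ssu2 k a d * Ssu2 k b d * conj (Ssu2 k l d) / Ssu2 k 0 d =
        ∑ i ∈ range (b + 1), Ssu2 k (a - b + 2 * i) d * Ssu2 k l d := by
    rw [conj_Ssu2, Ssu2_mul_Ssu2, mul_assoc,
      mul_div_cancel_left₀ _ (Ssu2_zero_ne_zero (mem_range_succ_iff.1 hd)), sum_mul]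
  rw [sum_congr rfl hexpand, sum_comm]
  simp only [sum_Ssu2_mul_Ssu2]
  exact sum_ite_dvd_sub_ite_dvd_eq_Nsu2 ha hba hl₀ hlk

end SU2

section U1

open Finset ComplexConjugate

theorem conj_Su1 (l : ℕ) (c f : ℤ) : conj (Su1 l c f) = Su1 l (-c) f := by
  unfold Su1
  rw [map_mul, Complex.conj_ofReal, ← Complex.exp_conj]
  simp

theorem Su1_ne_zero {l : ℕ} (hl : l ≠ 0) (c f : ℤ) : Su1 l c f ≠ 0 := by
  have hsqrt : 1 / √(2 * (l : ℝ)) ≠ 0 := by positivity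
  exact mul_ne_zero (Complex.ofReal_ne_zero.2 hsqrt) (Complex.exp_ne_zero _)

theorem Su1_mul_Su1 (l : ℕ) (c c' f : ℤ) :
    Su1 l c f * Su1 l c' f = Su1 l 0 f * Su1 l (c + c') f := by
  unfold Su1
  rw [mul_mul_mul_comm, ← Complex.exp_add, mul_mul_mul_comm, ← Complex.exp_add]
  congr 2
  push_cast
  ring

theorem sum_Su1_mul_conj_Su1 {l : ℕ} (hl : l ≠ 0) (c c' : ℤ) :
    ∑ f ∈ range (2 * l), Su1 l c f * conj (Su1 l c' f) =
      if c ≡ c' [ZMOD 2 * l] then 1 else 0 := by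
  have hexp (f : ℕ) : Su1 l c f * conj (Su1 l c' f) = 1 / (2 * l) *
      Complex.exp (2 * Real.pi * Complex.I * (c' - c : ℤ) * f / (2 * l : ℕ)) := by
    have hsqrt : (1 / √(2 * (l : ℝ))) * (1 / √(2 * (l : ℝ))) = 1 / (2 * l) := by
      rw [div_mul_div_comm, one_mul, Real.mul_self_sqrt (by positivity)]
    rw [conj_Su1, Su1, Su1, mul_mul_mul_comm, ← Complex.ofReal_mul, hsqrt, ← Complex.exp_add]
    push_cast
    congr 2
    field_simp
    ring
  have h2l : 2 * l ≠ 0 := mul_ne_zero two_ne_zero hl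
  have hl' : (l : ℂ) ≠ 0 := Nat.cast_ne_zero.2 hl
  simp only [hexp, Int.modEq_iff_dvd]
  rw [← mul_sum, sum_range_exp_two_pi_mul_I_mul_div h2l]
  push_cast
  rw [mul_ite, mul_zero, one_div_mul_cancel (by simpa using hl')]

theorem u1_verlinde {l : ℕ} (hl : l ≠ 0) (c c' γ : ℤ) :
    ∑ f ∈ range (2 * l), Su1 l c f * Su1 l c' f * conj (Su1 l γ f) / Su1 l 0 f =
      if c + c' ≡ γ [ZMOD 2 * l] then 1 else 0 := by
  rw [← sum_Su1_mul_conj_Su1 hl]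
  refine sum_congr rfl fun f _ ↦ ?_
  rw [Su1_mul_Su1, mul_assoc, mul_div_cancel_left₀ _ (Su1_ne_zero hl _ _)]

theorem Su1_add_level {l : ℕ} (hl : l ≠ 0) (c : ℤ) (f : ℕ) :
    Su1 l (c + l) f = (-1) ^ f * Su1 l c f := by
  have hl' : (l : ℂ) ≠ 0 := Nat.cast_ne_zero.2 hl
  have hexp : Complex.exp (-Real.pi * Complex.I * (c + l : ℤ) * (f : ℤ) / l) =
      (-1) ^ f * Complex.exp (-Real.pi * Complex.I * c * (f : ℤ) / l) := by
    rw [← Complex.exp_neg_pi_mul_I, ← Complex.exp_nat_mul, ← Complex.exp_add]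
    congr 1
    push_cast
    field_simp
    ring
  rw [Su1, Su1, hexp, mul_left_comm]

theorem two_mul_Su1_two (x y : ℤ) : 2 * Su1 2 x y = (-Complex.I) ^ (x * y) := by
  have hsqrt : √(2 * ((2 : ℕ) : ℝ)) = 2 := by
    rw [Nat.cast_ofNat, Real.sqrt_mul_self zero_le_two]
  rw [Su1, hsqrt, ← Complex.exp_neg_pi_div_two_mul_I, ← Complex.exp_int_mul, ← mul_assoc]
  push_cast
  rw [mul_one_div_cancel two_ne_zero, one_mul]
  congr 1
  ring

end U1

section MinimalModel

open Finset ComplexConjugate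

/-- The S-matrix of `su(2)_k ⊗ u(1)_{k+2}` with the `u(1)` factor conjugated: the minimal model
S-matrix stripped of its `u(1)_2` phase. -/
noncomputable def Sprod (k : ℕ) (a c d f : ℤ) : ℂ :=
  Ssu2 k a d * conj (Su1 (k + 2) c f)

theorem Smin_eq_zpow_mul_Sprod (k : ℕ) (a c d f : ℤ) :
    Smin k a c d f = (-Complex.I) ^ (par (a + c) * par (d + f)) * Sprod k a c d f := by
  rw [Smin, Sprod, ← two_mul_Su1_two]
  ring

theorem Sprod_simpleCurrent (k : ℕ) (a c : ℤ) (d f : ℕ) :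
    Sprod k (k - a) (c + (k + 2)) d f = (-1) ^ (d + f) * Sprod k a c d f := by
  have hu1 := Su1_add_level (l := k + 2) (by omega) c f
  push_cast at hu1
  rw [Sprod, Sprod, Ssu2_level_sub, hu1]
  simp only [map_mul, map_pow, map_neg, map_one]
  ring

theorem Sprod_verlinde {k a a' : ℕ} {α : ℤ} (ha : a ≤ k) (ha' : a' ≤ k) (hα₀ : 0 ≤ α)
    (hαk : α ≤ k) (c c' γ : ℤ) :
    ∑ d ∈ range (k + 1), ∑ f ∈ range (2 * (k + 2)),
        Sprod k a c d f * Sprod k a' c' d f * conj (Sprod k α γ d f) / Sprod k 0 0 d f =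
      Nsu2 k α a a' * (if c + c' ≡ γ [ZMOD 2 * ((k : ℤ) + 2)] then 1 else 0) := by
  have hu1 := u1_verlinde (l := k + 2) (by omega) (-c) (-c') (-γ)
  simp only [← neg_add, Int.neg_modEq_neg, Nat.cast_add, Nat.cast_ofNat] at hu1
  rw [← su2_verlinde ha ha' hα₀ hαk, ← hu1, sum_mul_sum]
  refine sum_congr rfl fun d _ ↦ sum_congr rfl fun f _ ↦ ?_
  simp only [Sprod, conj_Su1, map_mul, neg_zero]
  ring

theorem zpow_mul_par {K : Type*} [Field K] [NeZero (2 : K)] (z : K) (s : ℤ) (d f : ℕ) :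
    z ^ (s * par (d + f)) = (1 + z ^ s) / 2 + (1 - z ^ s) / 2 * (-1) ^ (d + f) := by
  rcases Nat.even_or_odd (d + f) with h | h
  · have hpar : par (d + f) = 0 := by
      unfold par
      exact_mod_cast Nat.even_iff.1 h
    rw [hpar, mul_zero, zpow_zero, h.neg_one_pow]
    field
  · have hpar : par (d + f) = 1 := by
      unfold par
      exact_mod_cast Nat.odd_iff.1 h
    rw [hpar, mul_one, h.neg_one_pow]
    field

theorem Smin_verlinde_summand (k : ℕ) (a c a' c' α γ d f : ℤ) :
    Smin k a c d f * Smin k a' c' d f * conj (Smin k α γ d f) / Smin k 0 0 d f =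
      (-Complex.I) ^ ((par (a + c) + par (a' + c') - par (α + γ)) * par (d + f)) *
        (Sprod k a c d f * Sprod k a' c' d f * conj (Sprod k α γ d f) / Sprod k 0 0 d f) := by
  have hI : -Complex.I ≠ 0 := neg_ne_zero.2 Complex.I_ne_zero
  have hconj : conj (-Complex.I) = (-Complex.I)⁻¹ := by simp
  have hvacuum : par (0 + 0) = 0 := rfl
  simp only [Smin_eq_zpow_mul_Sprod, map_mul, map_zpow₀, hconj, hvacuum, zero_mul, zpow_zero,
    one_mul, inv_zpow, sub_mul, add_mul, zpow_add₀ hI, zpow_sub₀ hI]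
  ring

theorem Smin_verlinde_eq_add {k a a' α : ℕ} (ha : a ≤ k) (ha' : a' ≤ k) (hα : α ≤ k) (c c' γ : ℤ) :
    ∑ d ∈ range (k + 1), ∑ f ∈ range (2 * (k + 2)),
        Smin k a c d f * Smin k a' c' d f * conj (Smin k α γ d f) / Smin k 0 0 d f =
      (1 + (-Complex.I) ^ (par (a + c) + par (a' + c') - par (α + γ))) / 2 *
          (Nsu2 k α a a' * (if c + c' ≡ γ [ZMOD 2 * ((k : ℤ) + 2)] then 1 else 0)) +
        (1 - (-Complex.I) ^ (par (a + c) + par (a' + c') - par (α + γ))) / 2 *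
          (Nsu2 k (k - α) a a' *
            (if c + c' ≡ γ + (k + 2) [ZMOD 2 * ((k : ℤ) + 2)] then 1 else 0)) := by
  rw [← Sprod_verlinde ha ha' (by omega) (by omega),
    ← Sprod_verlinde ha ha' (by omega) (by omega)]
  simp only [mul_sum, ← sum_add_distrib]
  refine sum_congr rfl fun d _ ↦ sum_congr rfl fun f _ ↦ ?_
  rw [Smin_verlinde_summand, zpow_mul_par, Sprod_simpleCurrent]
  simp only [map_mul, map_pow, map_neg, map_one]
  ring

theorem par_add_par_sub_par_of_even {x y z : ℤ} (h : Even (par x + par y - par z)) :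
    par x + par y - par z = if par x * par y = 0 then 0 else 2 := by
  rw [Int.even_iff] at h
  unfold par at *
  rcases Int.emod_two_eq_zero_or_one x with hx | hx <;>
    rcases Int.emod_two_eq_zero_or_one y with hy | hy <;> rw [hx, hy] at h ⊢ <;> norm_num <;> omega

theorem Nsu2_mul_ite_modEq_eq_zero {k : ℕ} {l a a' x y N : ℤ} (h : Odd (a + a' + l + (x - y))) :
    Nsu2 k l a a' * (if x ≡ y [ZMOD 2 * N] then 1 else 0) = 0 := by
  rw [Nsu2, ite_zero_mul_ite_zero, if_neg]
  rintro ⟨⟨-, -, heven⟩, hmod⟩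
  have hmod₂ : x % 2 = y % 2 := hmod.of_mul_right N
  rw [Int.odd_iff] at h
  omega

end MinimalModel

/-- the Verlinde sum for the `N=2` minimal model S-matrix factorises
into su(2) fusion numbers times u(1) delta-constraints, with a twist in the R×R case. -/
theorem verlinde_fusion (k : ℕ) (a a' α : ℕ) (ha : a ≤ k) (ha' : a' ≤ k) (hα : α ≤ k)
    (c c' γ : ℤ) :
    (∑ d ∈ Finset.range (k + 1), ∑ f ∈ Finset.range (2 * (k + 2)),
        Smin k (a : ℤ) c (d : ℤ) (f : ℤ) * Smin k (a' : ℤ) c' (d : ℤ) (f : ℤ) *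
          (starRingEnd ℂ) (Smin k (α : ℤ) γ (d : ℤ) (f : ℤ)) / Smin k 0 0 (d : ℤ) (f : ℤ))
      = if par ((a : ℤ) + c) * par ((a' : ℤ) + c') = 0 then
          Nsu2 k (α : ℤ) (a : ℤ) (a' : ℤ) *
            (if c + c' ≡ γ [ZMOD (2 * ((k : ℤ) + 2))] then 1 else 0)
        else
          Nsu2 k ((k : ℤ) - α) (a : ℤ) (a' : ℤ) *
            (if c + c' ≡ γ + ((k : ℤ) + 2) [ZMOD (2 * ((k : ℤ) + 2))] then 1 else 0) := by
  rw [Smin_verlinde_eq_add ha ha' hα]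
  rcases Int.even_or_odd (par (a + c) + par (a' + c') - par (α + γ)) with heven | hodd
  · rw [par_add_par_sub_par_of_even heven]
    by_cases hpar : par (a + c) * par (a' + c') = 0 <;> norm_num [hpar]
  · have hlabels : Odd (a + a' + α + (c + c' - γ)) := by
      unfold par at hodd
      rw [Int.odd_iff] at hodd ⊢
      omega
    have hcurrent : Odd (a + a' + (k - α) + (c + c' - (γ + (k + 2)))) := by
      rw [Int.odd_iff] at hlabels ⊢
      omega
    simp only [Nsu2_mul_ite_modEq_eq_zero hlabels, Nsu2_mul_ite_modEq_eq_zero hcurrent, mul_zero,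
      add_zero, ite_self]
end

section
/- Fix an integer k ≥ 0, set k̄ = k+2, and fix l ∈ {0,1} and d ∈ ℤ, determining the simple current j = (J^l 0, d) with label (a_j, c_j) = (l·k, d). Define j·(a,c) = (J^{l+(lk+d)(a+c)} a, c + d + (lk+d)(a+c)·k̄) with the second coordinate taken as an integer, where J^m a = a if m is even and J^m a = k−a if m is odd. Then for all a ∈ {0,…,k} and all integers c: Q_j(a,c) − (h_{a_j,c_j} + h_{a,c} − h_{j·(a,c)}) ∈ ℤ, where Q_j(a,c) = a·l/2 + c·d/(2k̄) − [kl+d]·[a+c]/4. -/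
/-- `J^m a`: the m-fold action of the su(2) simple current `J : a ↦ k - a`. -/
def Jpow (k m a : ℤ) : ℤ := if m % 2 = 0 then a else k - a

/-- The (extended) conformal weight `h_{a,c}` at level `k`. -/
noncomputable def hw (k : ℕ) (a c : ℤ) : ℝ :=
  ((a : ℝ) * ((a : ℝ) + 2) - (c : ℝ) ^ 2) / (4 * ((k : ℝ) + 2)) + (par (a + c) : ℝ) ^ 2 / 8

/-- The simple current charge `Q_j(a,c)` for `j = (J^l 0, d)`. -/
noncomputable def Qsc (k : ℕ) (l d a c : ℤ) : ℝ :=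
  ((a : ℝ) * (l : ℝ)) / 2 + ((c : ℝ) * (d : ℝ)) / (2 * ((k : ℝ) + 2))
    - ((par ((k : ℤ) * l + d) : ℝ) * (par (a + c) : ℝ)) / 4

/-!
Let `e = kl + d` and `s = a + c`. The action of `j` is the fusion `(a, c) ↦ (J^l a, c + d)` followed
by `es` steps of the map `(b, f) ↦ (k - b, f + k + 2)`. For the fusion alone, the difference of
weights is `al/2 + cd/(2(k+2)) + [e][s]/4`, the last term coming from
`[e + s] = [e] + [s] - 2[e][s]`.
A step lowers the weight by `(b + f + 1)/2`. Modulo 2, `b + f` equals `e + s` throughout, so modulo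
`ℤ` the `es` steps lower the weight by `es(e + s + 1)/2`, which is `[e][s]/2` because `es(e + s)` is
even. In total `[e][s]/4 + [e][s]/2` is `-[e][s]/4` modulo `ℤ`.
-/

open AddCommGroup

lemma par_modEq (x : ℤ) : par x ≡ x [ZMOD 2] := Int.mod_modEq x 2

lemma par_congr {x y : ℤ} (h : x ≡ y [ZMOD 2]) : par x = par y := h

lemma par_sq (x : ℤ) : par x ^ 2 = par x := by
  rcases Int.emod_two_eq_zero_or_one x with h | h <;> simp [par, h]

lemma par_add (x y : ℤ) : par (x + y) = par x + par y - 2 * par x * par y := by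
  rcases Int.emod_two_eq_zero_or_one x with hx | hx <;>
    rcases Int.emod_two_eq_zero_or_one y with hy | hy <;>
      simp [par, Int.add_emod, hx, hy]

lemma Jpow_of_even {m : ℤ} (hm : Even m) (k a : ℤ) : Jpow k m a = a :=
  if_pos (Int.even_iff.mp hm)

lemma Jpow_of_odd {m : ℤ} (hm : Odd m) (k a : ℤ) : Jpow k m a = k - a :=
  if_neg (by rw [Int.odd_iff.mp hm]; decide)

lemma Jpow_add (k m n a : ℤ) : Jpow k (m + n) a = Jpow k n (Jpow k m a) := by
  rcases Int.even_or_odd m with hm | hm <;> rcases Int.even_or_odd n with hn | hn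
  · rw [Jpow_of_even (hm.add hn), Jpow_of_even hm, Jpow_of_even hn]
  · rw [Jpow_of_odd (hm.add_odd hn), Jpow_of_even hm, Jpow_of_odd hn]
  · rw [Jpow_of_odd (hm.add_even hn), Jpow_of_odd hm, Jpow_of_even hn]
  · rw [Jpow_of_even (hm.add_odd hn), Jpow_of_odd hm, Jpow_of_odd hn, sub_sub_cancel]

lemma Jpow_modEq (k m a : ℤ) : Jpow k m a ≡ k * m + a [ZMOD 2] := by
  rcases Int.even_or_odd' m with ⟨n, rfl | rfl⟩
  · rw [Jpow_of_even (even_two_mul n), Int.modEq_iff_dvd]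
    exact ⟨k * n, by ring⟩
  · rw [Jpow_of_odd (odd_two_mul_add_one n), Int.modEq_iff_dvd]
    exact ⟨k * n + a, by ring⟩

lemma Jpow_add_add_modEq (k l d a c : ℤ) :
    Jpow k l a + (c + d) ≡ k * l + d + (a + c) [ZMOD 2] := by
  convert (Jpow_modEq k l a).add_right (c + d) using 1
  ring

lemma Jpow_casimir (k m a : ℤ) :
    Jpow k m 0 * (Jpow k m 0 + 2) + a * (a + 2) - Jpow k m a * (Jpow k m a + 2)
      = 2 * (k + 2) * (a * par m) := by
  rcases Int.even_or_odd m with hm | hm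
  · simp only [Jpow_of_even hm, par, Int.even_iff.mp hm]
    ring
  · simp only [Jpow_of_odd hm, par, Int.odd_iff.mp hm]
    ring

lemma intCast_div_two_modEq {m n : ℤ} (h : m ≡ n [ZMOD 2]) :
    (m : ℝ) / 2 ≡ (n : ℝ) / 2 [PMOD 1] := by
  have hcast : (m : ℝ) ≡ n [PMOD ((2 : ℤ) : ℝ)] :=
    intCast_modEq_intCast.mpr (modEq_iff_intModEq.mpr h)
  simpa [div_modEq_div] using hcast

lemma hw_reflect (k : ℕ) (a c : ℤ) :
    hw k (k - a) (c + (k + 2)) = hw k a c - ((a + c + 1 : ℤ) : ℝ) / 2 := by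
  have hpar : par (k - a + (c + (k + 2))) = par (a + c) :=
    par_congr (Int.modEq_iff_dvd.mpr ⟨a - k - 1, by ring⟩)
  rw [hw, hw, hpar]
  push_cast
  field_simp
  ring

lemma hw_add_period_mul (k : ℕ) (a c m : ℤ) :
    hw k a (c + 2 * m * (k + 2)) ≡ hw k a c [PMOD 1] := by
  have hpar : par (a + (c + 2 * m * (k + 2))) = par (a + c) :=
    par_congr (Int.modEq_iff_dvd.mpr ⟨-(m * (k + 2)), by ring⟩)
  refine modEq_iff_zsmul'.mpr ⟨m * c + m ^ 2 * (k + 2), ?_⟩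
  rw [hw, hw, hpar]
  push_cast
  rw [zsmul_one]
  push_cast
  field_simp
  ring

lemma hw_Jpow_add_mul (k : ℕ) (n a c : ℤ) :
    hw k (Jpow k n a) (c + n * (k + 2))
      ≡ hw k a c - ((n * (a + c + 1) : ℤ) : ℝ) / 2 [PMOD 1] := by
  rcases Int.even_or_odd' n with ⟨m, rfl | rfl⟩
  · have hhalf : ((0 : ℤ) : ℝ) / 2 ≡ ((2 * m * (a + c + 1) : ℤ) : ℝ) / 2 [PMOD 1] :=
      intCast_div_two_modEq (Int.modEq_iff_dvd.mpr ⟨m * (a + c + 1), by ring⟩)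
    rw [Jpow_of_even (even_two_mul m)]
    simpa using (hw_add_period_mul k a c m).sub hhalf
  · have hhalf : ((a + c + 1 : ℤ) : ℝ) / 2 ≡ (((2 * m + 1) * (a + c + 1) : ℤ) : ℝ) / 2 [PMOD 1] :=
      intCast_div_two_modEq (Int.modEq_iff_dvd.mpr ⟨m * (a + c + 1), by ring⟩)
    rw [Jpow_of_odd (odd_two_mul_add_one m),
      show c + (2 * m + 1) * ((k : ℤ) + 2) = c + (k + 2) + 2 * m * (k + 2) by ring]
    refine (hw_add_period_mul k (k - a) (c + (k + 2)) m).trans ?_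
    rw [hw_reflect]
    exact hhalf.sub_left _

lemma hw_fusion (k : ℕ) (l d a c : ℤ) :
    hw k (Jpow k l 0) d + hw k a c - hw k (Jpow k l a) (c + d)
      = ((a * par l : ℤ) : ℝ) / 2 + c * d / (2 * (k + 2)) + par (k * l + d) * par (a + c) / 4 := by
  have hpar₀ : par (Jpow k l 0 + d) = par (k * l + d) :=
    par_congr (by simpa using (Jpow_modEq k l 0).add_right d)
  have hpar : par (Jpow k l a + (c + d)) = par (k * l + d + (a + c)) :=
    par_congr (Jpow_add_add_modEq k l d a c)
  have hsq (x : ℤ) : (par x : ℝ) ^ 2 = par x := mod_cast par_sq x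
  have hadd : (par (k * l + d + (a + c)) : ℝ)
      = par (k * l + d) + par (a + c) - 2 * par (k * l + d) * par (a + c) := mod_cast par_add _ _
  have hcas : (Jpow k l 0 * (Jpow k l 0 + 2) + a * (a + 2) - Jpow k l a * (Jpow k l a + 2) : ℝ)
      = 2 * (k + 2) * (a * par l) := mod_cast Jpow_casimir k l a
  rw [hw, hw, hw, hpar₀, hpar, hsq, hsq, hsq, hadd]
  push_cast
  field_simp
  linear_combination 16 * hcas

lemma mul_mul_add_add_one_modEq (x y : ℤ) : x * y * (x + y + 1) ≡ x * y [ZMOD 2] := by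
  have heven : Even (x * y * (x + y)) := by
    simp only [Int.even_mul, Int.even_add]
    tauto
  simpa [mul_add] using (Int.modEq_zero_iff_dvd.mpr heven.two_dvd).add_right (x * y)

lemma hw_current_action_modEq (k : ℕ) (l d a c : ℤ) :
    hw k (Jpow k (l + (k * l + d) * (a + c)) a) (c + d + (k * l + d) * (a + c) * (k + 2))
      ≡ hw k (Jpow k l a) (c + d) - ((par (k * l + d) * par (a + c) : ℤ) : ℝ) / 2 [PMOD 1] := by
  set e : ℤ := k * l + d
  set s : ℤ := a + c
  have hsteps : e * s * (Jpow k l a + (c + d) + 1) ≡ par e * par s [ZMOD 2] :=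
    calc e * s * (Jpow k l a + (c + d) + 1) ≡ e * s * (e + s + 1) [ZMOD 2] :=
          ((Jpow_add_add_modEq k l d a c).add_right 1).mul_left (e * s)
      _ ≡ e * s [ZMOD 2] := mul_mul_add_add_one_modEq e s
      _ ≡ par e * par s [ZMOD 2] := ((par_modEq e).mul (par_modEq s)).symm
  rw [Jpow_add]
  exact (hw_Jpow_add_mul k (e * s) (Jpow k l a) (c + d)).trans
    ((intCast_div_two_modEq hsteps).sub_left _)

lemma Qsc_modEq_fusion (k : ℕ) (l d a c : ℤ) :
    Qsc k l d a c ≡ hw k (Jpow k l 0) d + hw k a c - hw k (Jpow k l a) (c + d)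
      + ((par (k * l + d) * par (a + c) : ℤ) : ℝ) / 2 [PMOD 1] := by
  rw [Qsc, hw_fusion]
  set P : ℤ := par (k * l + d) * par (a + c) with hP
  have hneg : -P ≡ P [ZMOD 2] := Int.modEq_iff_dvd.mpr ⟨P, by ring⟩
  have hhalf : ((a * l + -P : ℤ) : ℝ) / 2 ≡ ((a * par l + P : ℤ) : ℝ) / 2 [PMOD 1] :=
    intCast_div_two_modEq (((par_modEq l).symm.mul_left a).add hneg)
  convert hhalf.add_right ((c : ℝ) * d / (2 * (k + 2)) + P / 4) using 1 <;>
    (push_cast [hP]; ring)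

-- For `l ∉ {0, 1}` the label of `J^l 0` is no longer `l * k`, hence `Jpow k l 0`.
theorem charge_is_monodromy_general (k : ℕ) (l d a c : ℤ) :
    Qsc k l d a c ≡
      hw k (Jpow k l 0) d + hw k a c
        - hw k (Jpow k (l + (l * k + d) * (a + c)) a) (c + d + (l * k + d) * (a + c) * (k + 2))
      [PMOD 1] := by
  have hfusion := Qsc_modEq_fusion k l d a c
  rw [sub_add] at hfusion
  rw [mul_comm l (k : ℤ)]
  exact hfusion.trans ((hw_current_action_modEq k l d a c).symm.sub_left _)

/-- `Q_j(a,c)` is the monodromy charge: it agrees with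
`h_{a_j,c_j} + h_{a,c} - h_{j·(a,c)}` modulo ℤ. -/
theorem charge_is_monodromy (k : ℕ) (l : ℤ) (hl : l = 0 ∨ l = 1) (d : ℤ)
    (a : ℕ) (ha : a ≤ k) (c : ℤ) :
    ∃ m : ℤ,
      Qsc k l d (a : ℤ) c
        - (hw k (l * (k : ℤ)) d + hw k (a : ℤ) c
            - hw k (Jpow (k : ℤ) (l + (l * (k : ℤ) + d) * ((a : ℤ) + c)) (a : ℤ))
                (c + d + (l * (k : ℤ) + d) * ((a : ℤ) + c) * ((k : ℤ) + 2)))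
      = (m : ℝ) := by
  have hJ : Jpow k l 0 = l * k := by rcases hl with rfl | rfl <;> simp [Jpow]
  simpa [hJ] using modEq_iff_zsmul'.mp (charge_is_monodromy_general k l d a c).symm
end

section
/- Fix an integer k ≥ 0 and set k̄ = k+2. On the set J = {0,1} × ℤ/(2k̄)ℤ, the binary operation (l₁,d₁) × (l₂,d₂) = (l₁ + l₂ + (l₁k+d₁)(l₂k+d₂) mod 2, d₁ + d₂ + (l₁k+d₁)(l₂k+d₂)·k̄ mod 2k̄) (computed with integer representatives d₁, d₂, and well defined independently of the choice of representatives) makes J into a commutative group with identity element (0,0), in which the inverse of (l,d) is (l + lk + d mod 2, −d + (lk+d)·k̄ mod 2k̄). Moreover this group is isomorphic to ℤ/(4k̄)ℤ if k is odd, and to ℤ/2ℤ × ℤ/(2k̄)ℤ if k is even. -/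
/-- The simple current product on `{0,1} × ℤ/(2k̄)ℤ`, computed with the canonical
integer representatives (`ZMod.val`). -/
def scMul (k : ℕ) (x y : ZMod 2 × ZMod (2 * (k + 2))) : ZMod 2 × ZMod (2 * (k + 2)) :=
  ((((x.1.val : ℤ) + (y.1.val : ℤ) +
      ((x.1.val : ℤ) * (k : ℤ) + (x.2.val : ℤ)) * ((y.1.val : ℤ) * (k : ℤ) + (y.2.val : ℤ)) :
        ℤ) : ZMod 2),
   (((x.2.val : ℤ) + (y.2.val : ℤ) +
      ((x.1.val : ℤ) * (k : ℤ) + (x.2.val : ℤ)) * ((y.1.val : ℤ) * (k : ℤ) + (y.2.val : ℤ)) *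
        ((k : ℤ) + 2) : ℤ) : ZMod (2 * (k + 2))))

/-- The claimed inverse `(l + lk + d, -d + (lk+d)·k̄)` for the simple current product. -/
def scInv (k : ℕ) (x : ZMod 2 × ZMod (2 * (k + 2))) : ZMod 2 × ZMod (2 * (k + 2)) :=
  ((((x.1.val : ℤ) + (x.1.val : ℤ) * (k : ℤ) + (x.2.val : ℤ) : ℤ) : ZMod 2),
   ((-(x.2.val : ℤ) + ((x.1.val : ℤ) * (k : ℤ) + (x.2.val : ℤ)) * ((k : ℤ) + 2) : ℤ) :
      ZMod (2 * (k + 2))))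

/-!
Put `k̄ = k + 2`. The simple current product is `x + y + ε (p x * p y)`, where `p (l, d) = l k + d`
is a homomorphism from `ℤ/2 × ℤ/2k̄` to the ring `ℤ/2` and `ε : ℤ/2 → ℤ/2 × ℤ/2k̄` sends `1` to
`(1, k̄)`. The group laws only need `p ∘ ε = 0`, which makes `ε (p x * p y)` a symmetric 2-cocycle.

For `k` odd, adding to the homomorphism `(l, d) ↦ 2 d` into `ℤ/4k̄` the term `k̄` whenever `p ≠ 0`
absorbs the cocycle, because `k̄` is half of the image `2 k̄` of `(1, k̄)`. For `k` even, `d mod 4`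
makes sense and `p = d mod 2`, so `C(d + d', 2) = C(d, 2) + C(d', 2) + d d'` shows that the cocycle
is a coboundary; the term `C(k̄, 2) l` makes the trivializing function vanish at `(1, k̄)`.
-/

section Twist

variable {R A : Type*} [NonUnitalCommRing R] [AddCommGroup A] (p : A →+ R) (ε : R →+ A)

/-- The addition of `A` twisted by the symmetric 2-cocycle `(x, y) ↦ ε (p x * p y)`; it is
associative when `p ∘ ε = 0`. -/
def twistAdd (x y : A) : A :=
  x + y + ε (p x * p y)

theorem twistAdd_comm (x y : A) : twistAdd p ε x y = twistAdd p ε y x := by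
  rw [twistAdd, twistAdd, add_comm x, mul_comm]

theorem zero_twistAdd (x : A) : twistAdd p ε 0 x = x := by
  simp [twistAdd]

variable {p ε}

theorem twistAdd_assoc (hpε : ∀ r, p (ε r) = 0) (x y z : A) :
    twistAdd p ε (twistAdd p ε x y) z = twistAdd p ε x (twistAdd p ε y z) := by
  simp only [twistAdd, map_add, hpε, add_zero, add_mul, mul_add]
  abel

theorem twistAdd_neg_add_eq_zero (hpε : ∀ r, p (ε r) = 0) (x : A) :
    twistAdd p ε x (-x + ε (p x * p x)) = 0 := by
  simp [twistAdd, hpε]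

theorem add_map_twistAdd {B : Type*} [AddCommGroup B] (hpε : ∀ r, p (ε r) = 0)
    (φ : A →+ B) {f : A → B} (hfε : ∀ r, f (ε r) = 0)
    (hf : ∀ x y, f (x + y) = f x + f y - φ (ε (p x * p y))) (x y : A) :
    φ (twistAdd p ε x y) + f (twistAdd p ε x y) = (φ x + f x) + (φ y + f y) := by
  have hf_twist : f (twistAdd p ε x y) = f (x + y) := by
    simp [twistAdd, hf (x + y), hfε, hpε]
  rw [hf_twist, hf, twistAdd, map_add, map_add]
  abel

variable (p ε) in
/-- `γ` exhibits the cocycle `ε (p x * p y)` as the coboundary of `ε ∘ γ`, and vanishes on the image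
of `ε`, so that `x ↦ x - ε (γ x)` carries the twisted addition to the addition of `A`. -/
structure IsUntwisting (γ : A → R) : Prop where
  map_add (x y : A) : γ (x + y) = γ x + γ y + p x * p y
  map_shift (r : R) : γ (ε r) = 0

namespace IsUntwisting

variable {γ : A → R}

theorem map_add_shift (hγ : IsUntwisting p ε γ) (hpε : ∀ r, p (ε r) = 0) (x : A) (r : R) :
    γ (x + ε r) = γ x := by
  simp [hγ.map_add, hγ.map_shift, hpε]

/-- The bijection `x ↦ x - ε (γ x)` from the twisted group to `A`. -/
def equiv (hγ : IsUntwisting p ε γ) (hpε : ∀ r, p (ε r) = 0) : A ≃ A where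
  toFun x := x - ε (γ x)
  invFun x := x + ε (γ x)
  left_inv x := by
    have h : γ (x - ε (γ x)) = γ x := by
      rw [sub_eq_add_neg, ← map_neg, hγ.map_add_shift hpε]
    simp [h]
  right_inv x := by simp [hγ.map_add_shift hpε]

theorem equiv_twistAdd (hγ : IsUntwisting p ε γ) (hpε : ∀ r, p (ε r) = 0) (x y : A) :
    hγ.equiv hpε (twistAdd p ε x y) = hγ.equiv hpε x + hγ.equiv hpε y := by
  have h := add_map_twistAdd hpε (AddMonoidHom.id A) (f := fun x => -ε (γ x))
    (fun r => by simp [hγ.map_shift])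
    (fun x y => by simp only [hγ.map_add, _root_.map_add, AddMonoidHom.id_apply]; abel) x y
  simpa only [equiv, Equiv.coe_fn_mk, AddMonoidHom.id_apply, ← sub_eq_add_neg] using h

end IsUntwisting

end Twist

theorem intCast_val_prod {m n : ℕ} [NeZero m] [NeZero n] (x : ZMod m × ZMod n) :
    (((x.1.val : ℤ) : ZMod m), ((x.2.val : ℤ) : ZMod n)) = x := by
  ext <;> simp

/-- The homomorphism `d ↦ 2 d` from `ℤ/2n` to `ℤ/4n`. -/
def zmodDouble (n : ℕ) : ZMod (2 * n) →+ ZMod (4 * n) :=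
  ZMod.lift _ ⟨zmultiplesHom _ 2, by
    have h := ZMod.natCast_self (4 * n)
    push_cast at h
    simp only [zmultiplesHom_apply, natCast_zsmul, nsmul_eq_mul]
    push_cast
    linear_combination h⟩

theorem zmodDouble_intCast (n : ℕ) (a : ℤ) :
    zmodDouble n (a : ZMod (2 * n)) = ((2 * a : ℤ) : ZMod (4 * n)) := by
  rw [zmodDouble, ZMod.lift_coe]
  simp [mul_comm]

theorem zmodDouble_injective (n : ℕ) : Function.Injective (zmodDouble n) := by
  refine (injective_iff_map_eq_zero _).2 fun d hd => ?_
  obtain ⟨a, rfl⟩ := ZMod.intCast_surjective d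
  rw [zmodDouble_intCast, ZMod.intCast_zmod_eq_zero_iff_dvd] at hd
  rw [ZMod.intCast_zmod_eq_zero_iff_dvd]
  refine Int.dvd_of_mul_dvd_mul_left two_ne_zero ?_
  convert hd using 1
  push_cast
  ring

section SimpleCurrents

variable (k : ℕ)

/-- The homomorphism `(l, d) ↦ l k + d mod 2`. -/
def scParity : ZMod 2 × ZMod (2 * (k + 2)) →+ ZMod 2 :=
  (AddMonoidHom.mulRight (k : ZMod 2)).coprod
    (ZMod.castHom (dvd_mul_right 2 (k + 2)) (ZMod 2)).toAddMonoidHom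

/-- The homomorphism from `ℤ/2` sending `1` to the element `(1, k̄)` of order two. -/
def scShift : ZMod 2 →+ ZMod 2 × ZMod (2 * (k + 2)) :=
  ZMod.lift 2 ⟨zmultiplesHom _ (1, (k : ZMod (2 * (k + 2))) + 2), by
    have h := ZMod.natCast_self (2 * (k + 2))
    push_cast at h
    ext
    · simpa using (by decide : (2 : ZMod 2) = 0)
    · simpa [mul_add] using h⟩

theorem scParity_apply (x : ZMod 2 × ZMod (2 * (k + 2))) :
    scParity k x = x.1 * k + ZMod.castHom (dvd_mul_right 2 (k + 2)) (ZMod 2) x.2 :=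
  rfl

theorem scParity_intCast (l d : ℤ) :
    scParity k ((l : ZMod 2), (d : ZMod (2 * (k + 2)))) = ((l * k + d : ℤ) : ZMod 2) := by
  simp only [scParity_apply, map_intCast]
  push_cast
  rfl

theorem scShift_intCast (n : ℤ) :
    scShift k (n : ZMod 2) = ((n : ZMod 2), (n : ZMod (2 * (k + 2))) * (k + 2)) := by
  rw [scShift, ZMod.lift_coe]
  ext <;> simp [mul_add]

theorem scShift_one : scShift k 1 = (1, (k : ZMod (2 * (k + 2))) + 2) := by
  simpa using scShift_intCast k 1

theorem scParity_scShift (r : ZMod 2) : scParity k (scShift k r) = 0 := by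
  obtain ⟨n, rfl⟩ := ZMod.intCast_surjective r
  have h : ((n * (k + 2) : ℤ) : ZMod (2 * (k + 2))) = (n : ZMod (2 * (k + 2))) * (k + 2) := by
    push_cast
    rfl
  rw [scShift_intCast, ← h, scParity_intCast, ZMod.intCast_eq_zero_iff_even]
  exact ⟨n * (k + 1), by ring⟩

theorem twistAdd_scShift_intCast (l₁ d₁ l₂ d₂ : ℤ) :
    twistAdd (scParity k) (scShift k) ((l₁ : ZMod 2), (d₁ : ZMod (2 * (k + 2))))
        ((l₂ : ZMod 2), (d₂ : ZMod (2 * (k + 2)))) =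
      (((l₁ + l₂ + (l₁ * k + d₁) * (l₂ * k + d₂) : ℤ) : ZMod 2),
        ((d₁ + d₂ + (l₁ * k + d₁) * (l₂ * k + d₂) * (k + 2) : ℤ) : ZMod (2 * (k + 2)))) := by
  rw [twistAdd, scParity_intCast, scParity_intCast, ← Int.cast_mul, scShift_intCast]
  ext <;> push_cast <;> rfl

theorem scMul_eq_twistAdd : scMul k = twistAdd (scParity k) (scShift k) := by
  funext x y
  conv_rhs => rw [← intCast_val_prod x, ← intCast_val_prod y, twistAdd_scShift_intCast]
  rfl

theorem scInv_eq (x : ZMod 2 × ZMod (2 * (k + 2))) :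
    scInv k x = -x + scShift k (scParity k x * scParity k x) := by
  have mul_self (a : ZMod 2) : a * a = a := by revert a; decide
  conv_rhs => rw [mul_self, ← intCast_val_prod x, scParity_intCast, scShift_intCast]
  ext
  · simp [scInv, ZMod.neg_eq_self_mod_two, add_assoc]
  · simp [scInv]

section Odd

/-- The map `(l, d) ↦ 2 d + (l k + d mod 2) k̄`, an isomorphism from the
simple current group onto `ℤ/4k̄` for odd `k`. -/
def scOddMap (x : ZMod 2 × ZMod (2 * (k + 2))) : ZMod (4 * (k + 2)) :=
  zmodDouble (k + 2) x.2 + (scParity k x).val • ((k : ZMod (4 * (k + 2))) + 2)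

theorem scOddMap_twistAdd (x y : ZMod 2 × ZMod (2 * (k + 2))) :
    scOddMap k (twistAdd (scParity k) (scShift k) x y) = scOddMap k x + scOddMap k y := by
  have double_shift : zmodDouble (k + 2) (scShift k 1).2 = 2 * (k + 2) := by
    simpa [scShift_one] using zmodDouble_intCast (k + 2) (k + 2)
  have val_add_smul (a b : ZMod 2) : (a + b).val • ((k : ZMod (4 * (k + 2))) + 2) =
      a.val • ((k : ZMod (4 * (k + 2))) + 2) + b.val • ((k : ZMod (4 * (k + 2))) + 2) -
        zmodDouble (k + 2) (scShift k (a * b)).2 := by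
    obtain rfl | rfl : a = 0 ∨ a = 1 := by revert a; decide
    · simp
    obtain rfl | rfl : b = 0 ∨ b = 1 := by revert b; decide
    · simp
    · rw [mul_one, double_shift, show (1 + 1 : ZMod 2) = 0 from rfl, ZMod.val_zero, ZMod.val_one]
      ring
  exact add_map_twistAdd (scParity_scShift k) ((zmodDouble (k + 2)).comp (AddMonoidHom.snd _ _))
    (f := fun x => (scParity k x).val • ((k : ZMod (4 * (k + 2))) + 2))
    (fun r => by simp [scParity_scShift]) (fun x y => by simp [val_add_smul]) x y

variable {k}

theorem castHom_scOddMap (hk : Odd k) (x : ZMod 2 × ZMod (2 * (k + 2))) :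
    ZMod.castHom (Dvd.dvd.mul_right (by decide : 2 ∣ 4) (k + 2)) (ZMod 2) (scOddMap k x) =
      scParity k x := by
  obtain ⟨n, hn⟩ := ZMod.intCast_surjective x.2
  have two_eq_zero : (2 : ZMod 2) = 0 := rfl
  have hk_one : (k : ZMod 2) = 1 := ZMod.natCast_eq_one_iff_odd.2 hk
  rw [scOddMap, ← hn, zmodDouble_intCast, map_add, map_intCast, map_nsmul, map_add, map_natCast,
    map_ofNat]
  simp [two_eq_zero, hk_one]

theorem scOddMap_injective (hk : Odd k) : Function.Injective (scOddMap k) := by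
  intro x y hxy
  have hp : scParity k x = scParity k y := by
    rw [← castHom_scOddMap hk, hxy, castHom_scOddMap hk]
  have hd : x.2 = y.2 := by
    rw [scOddMap, scOddMap, hp] at hxy
    exact zmodDouble_injective (k + 2) (add_right_cancel hxy)
  have hl : x.1 = y.1 := by
    have hk_one : (k : ZMod 2) = 1 := ZMod.natCast_eq_one_iff_odd.2 hk
    simpa [scParity_apply, hd, hk_one] using hp
  exact Prod.ext hl hd

theorem exists_equiv_of_odd (hk : Odd k) :
    ∃ e : ZMod 2 × ZMod (2 * (k + 2)) ≃ ZMod (4 * (k + 2)),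
      ∀ x y, e (twistAdd (scParity k) (scShift k) x y) = e x + e y := by
  have hbij : Function.Bijective (scOddMap k) := by
    refine (scOddMap_injective hk).bijective_of_nat_card_le ?_
    simp only [Nat.card_prod, Nat.card_zmod]
    omega
  exact ⟨Equiv.ofBijective _ hbij, scOddMap_twistAdd k⟩

end Odd

section Even

/-- The binomial coefficient `C(a, 2)` modulo two, which only depends on `a` modulo four. -/
def chooseTwo (a : ZMod 4) : ZMod 2 :=
  (a.val.choose 2 : ZMod 2)

theorem chooseTwo_add (a b : ZMod 4) :
    chooseTwo (a + b) = chooseTwo a + chooseTwo b +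
      ZMod.castHom (by decide : 2 ∣ 4) (ZMod 2) a * ZMod.castHom (by decide) (ZMod 2) b := by
  revert a b
  decide

variable {k}

theorem exists_isUntwisting_of_even (hk : Even k) :
    ∃ γ, IsUntwisting (scParity k) (scShift k) γ := by
  have hdvd : 4 ∣ 2 * (k + 2) := by
    obtain ⟨m, rfl⟩ := hk
    exact ⟨m + 1, by ring⟩
  let r := ZMod.castHom hdvd (ZMod 4)
  have parity_eq (x : ZMod 2 × ZMod (2 * (k + 2))) :
      scParity k x = ZMod.castHom (by decide : 2 ∣ 4) (ZMod 2) (r x.2) := by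
    have hk_zero : (k : ZMod 2) = 0 := ZMod.natCast_eq_zero_iff_even.2 hk
    obtain ⟨n, hn⟩ := ZMod.intCast_surjective x.2
    simp only [scParity_apply, hk_zero, mul_zero, zero_add, ← hn, map_intCast]
  refine ⟨fun x => chooseTwo (r x.2) + chooseTwo ((k : ZMod 4) + 2) * x.1,
    fun x y => ?_, fun s => ?_⟩
  · simp only [Prod.fst_add, Prod.snd_add, map_add, chooseTwo_add, parity_eq]
    ring
  · obtain rfl | rfl : s = 0 ∨ s = 1 := by revert s; decide
    · simp [chooseTwo]
    · simp only [scShift_one, map_add, map_natCast, map_ofNat, mul_one,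
        CharTwo.add_self_eq_zero, r]

theorem exists_equiv_of_even (hk : Even k) :
    ∃ e : ZMod 2 × ZMod (2 * (k + 2)) ≃ ZMod 2 × ZMod (2 * (k + 2)),
      ∀ x y, e (twistAdd (scParity k) (scShift k) x y) = e x + e y :=
  let ⟨_, hγ⟩ := exists_isUntwisting_of_even hk
  ⟨hγ.equiv (scParity_scShift k), hγ.equiv_twistAdd (scParity_scShift k)⟩

end Even

end SimpleCurrents

/-- the simple current product is well defined on integer representatives,
makes `{0,1} × ℤ/(2k̄)ℤ` a commutative group with identity `(0,0)` and the stated inverse,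
and this group is `ℤ/(4k̄)ℤ` for odd `k` and `ℤ/2ℤ × ℤ/(2k̄)ℤ` for even `k`. -/
theorem simple_current_group (k : ℕ) [NeZero (2 * (k + 2))] :
    (∀ l₁ d₁ l₂ d₂ : ℤ,
      scMul k ((l₁ : ZMod 2), (d₁ : ZMod (2 * (k + 2))))
          ((l₂ : ZMod 2), (d₂ : ZMod (2 * (k + 2))))
        = (((l₁ + l₂ + (l₁ * (k : ℤ) + d₁) * (l₂ * (k : ℤ) + d₂) : ℤ) : ZMod 2),
           ((d₁ + d₂ + (l₁ * (k : ℤ) + d₁) * (l₂ * (k : ℤ) + d₂) * ((k : ℤ) + 2) : ℤ) :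
              ZMod (2 * (k + 2)))))
    ∧ (∀ x y, scMul k x y = scMul k y x)
    ∧ (∀ x y z, scMul k (scMul k x y) z = scMul k x (scMul k y z))
    ∧ (∀ x, scMul k (0, 0) x = x)
    ∧ (∀ x, scMul k x (scInv k x) = (0, 0))
    ∧ (Odd k →
        ∃ e : (ZMod 2 × ZMod (2 * (k + 2))) ≃ ZMod (4 * (k + 2)),
          ∀ x y, e (scMul k x y) = e x + e y)
    ∧ (Even k →
        ∃ e : (ZMod 2 × ZMod (2 * (k + 2))) ≃ ZMod 2 × ZMod (2 * (k + 2)),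
          ∀ x y, e (scMul k x y) = e x + e y) := by
  have hpε := scParity_scShift k
  simp only [scMul_eq_twistAdd]
  exact ⟨twistAdd_scShift_intCast k, twistAdd_comm _ _, twistAdd_assoc hpε, zero_twistAdd _ _,
    fun x => (scInv_eq k x).symm ▸ twistAdd_neg_add_eq_zero hpε x, exists_equiv_of_odd,
    exists_equiv_of_even⟩
end

section
/- Let k be an odd positive integer, k̄ = k+2, and let (v,z,n) satisfy v ∣ k̄, k̄ ∣ v², (v²/k̄) ∣ (4z²−1), and n ∈ {0,1}. Say that a quadruple of integers (a,c,a',c') with a,a' ∈ {0,…,k} satisfies condition P if: a' = J^{(a+c)n} a (where J^m a = a for m even and k−a for m odd), c' ≡ c + (a+c)n (mod 2), and c' ≡ 2cz (mod v²/k̄). Then for any two quadruples (a,c,a',c') and (d,f,d',f') satisfying P, the mutual locality exponent μ = (C'·F' − C·F)/(2k̄) + ([a+C][d+F] − [a'+C'][d'+F'])/4, where C = c·k̄/v, C' = c'·k̄/v, F = f·k̄/v, F' = f'·k̄/v, satisfies 2μ ∈ ℤ. -/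
/-- Condition `P` describing the nonzero entries of the odd-level physical
invariant `M⁰[v,z,n]`. -/
def P0 (k v z n a c a' c' : ℤ) : Prop :=
  a' = Jpow k ((a + c) * n) a ∧
  c' ≡ c + (a + c) * n [ZMOD 2] ∧
  c' ≡ 2 * c * z [ZMOD (v ^ 2 / (k + 2))]

/-- The mutual locality exponent of the level-`k` fields labelled `(a, C; a', C')` and
`(d, F; d', F')`. The exponent is only meaningful modulo `ℤ`; this is its representative given by
taking the parities `[x]` in `{0, 1}`. -/
def localityExponent (k a C a' C' d F d' F' : ℤ) : ℚ :=
  ((C' * F' - C * F : ℤ) : ℚ) / (2 * ((k : ℚ) + 2))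
    + ((par (a + C) * par (d + F) - par (a' + C') * par (d' + F') : ℤ) : ℚ) / 4

theorem par_eq_par_iff {x y : ℤ} : par x = par y ↔ x ≡ y [ZMOD 2] :=
  Iff.rfl

theorem Jpow_modEq_add {k : ℤ} (hk : Odd k) (m a : ℤ) : Jpow k m a ≡ a + m [ZMOD 2] := by
  have hk_mod : k % 2 = 1 := Int.odd_iff.mp hk
  simp only [Jpow, Int.ModEq]
  split_ifs <;> omega

theorem mul_modEq_self_of_odd {w : ℤ} (hw : Odd w) (c : ℤ) : c * w ≡ c [ZMOD 2] := by
  simpa using (Int.ModEq.refl c).mul (show w ≡ 1 [ZMOD 2] from Int.odd_iff.mp hw)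

theorem mul_modEq_mul_of_sq_modEq_one {u s x y x' y' : ℤ} (hs : s ^ 2 ≡ 1 [ZMOD u])
    (hx : x' ≡ x * s [ZMOD u]) (hy : y' ≡ y * s [ZMOD u]) : x' * y' ≡ x * y [ZMOD u] := calc
  x' * y' ≡ x * s * (y * s) [ZMOD u] := hx.mul hy
  _ = x * y * s ^ 2 := by ring
  _ ≡ x * y * 1 [ZMOD u] := hs.mul_left (x * y)
  _ = x * y := mul_one _

theorem sq_div_mul_div_sq {R : Type*} [EuclideanDomain R] {K v : R}
    (hv : v ∣ K) (hK : K ∣ v ^ 2) : v ^ 2 / K * (K / v) ^ 2 = K := by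
  rcases eq_or_ne K 0 with rfl | hK0
  · simp
  have hv0 : v ≠ 0 := ne_zero_of_dvd_ne_zero hK0 hv
  apply mul_left_cancel₀ hK0
  calc
    K * (v ^ 2 / K * (K / v) ^ 2) = K * (v ^ 2 / K) * (K / v) ^ 2 := (mul_assoc ..).symm
    _ = (v * (K / v)) ^ 2 := by rw [EuclideanDomain.mul_div_cancel' hK0 hK, mul_pow]
    _ = K * K := by rw [EuclideanDomain.mul_div_cancel' hv0 hv, sq]

theorem mul_div_sq_modEq {K v x y : ℤ} (hv : v ∣ K) (hK : K ∣ v ^ 2)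
    (h : x ≡ y [ZMOD v ^ 2 / K]) : x * (K / v) ^ 2 ≡ y * (K / v) ^ 2 [ZMOD K] := by
  have hmod : v ^ 2 / K * (K / v) ^ 2 = K := sq_div_mul_div_sq hv hK
  have hmul := h.mul_right' (c := (K / v) ^ 2)
  rwa [hmod] at hmul

namespace P0

variable {k v z n a c a' c' d f d' f' : ℤ}

theorem add_modEq_add (hk : Odd k) (h : P0 k v z n a c a' c') : a' + c' ≡ a + c [ZMOD 2] := by
  obtain ⟨rfl, hc, -⟩ := h
  set m := (a + c) * n
  calc
    Jpow k m a + c' ≡ (a + m) + (c + m) [ZMOD 2] := (Jpow_modEq_add hk m a).add hc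
    _ = a + c + 2 * m := by ring
    _ ≡ a + c [ZMOD 2] := Int.add_mul_emod_self_left ..

theorem par_add_mul_odd (hk : Odd k) {w : ℤ} (hw : Odd w) (h : P0 k v z n a c a' c') :
    par (a' + c' * w) = par (a + c * w) :=
  par_eq_par_iff.mpr <| calc
    a' + c' * w ≡ a' + c' [ZMOD 2] := (mul_modEq_self_of_odd hw c').add_left a'
    _ ≡ a + c [ZMOD 2] := h.add_modEq_add hk
    _ ≡ a + c * w [ZMOD 2] := ((mul_modEq_self_of_odd hw c).add_left a).symm

theorem charge_mul_charge_modEq (hv : v ∣ k + 2) (hkv : k + 2 ∣ v ^ 2)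
    (hz : v ^ 2 / (k + 2) ∣ 4 * z ^ 2 - 1)
    (h₁ : P0 k v z n a c a' c') (h₂ : P0 k v z n d f d' f') :
    c' * ((k + 2) / v) * (f' * ((k + 2) / v)) ≡
      c * ((k + 2) / v) * (f * ((k + 2) / v)) [ZMOD k + 2] := by
  have twist_sq : (2 * z) ^ 2 ≡ 1 [ZMOD v ^ 2 / (k + 2)] := by
    rw [mul_pow]
    exact (Int.modEq_of_dvd hz).symm
  have hc : c' ≡ c * (2 * z) [ZMOD v ^ 2 / (k + 2)] := by
    simpa only [mul_assoc, mul_left_comm] using h₁.2.2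
  have hf : f' ≡ f * (2 * z) [ZMOD v ^ 2 / (k + 2)] := by
    simpa only [mul_assoc, mul_left_comm] using h₂.2.2
  have hcf : c' * f' ≡ c * f [ZMOD v ^ 2 / (k + 2)] :=
    mul_modEq_mul_of_sq_modEq_one twist_sq hc hf
  simpa only [mul_mul_mul_comm, sq] using mul_div_sq_modEq hv hkv hcf

end P0

theorem two_mul_localityExponent_of_par_eq {a C a' C' d F d' F' : ℤ} (k : ℤ)
    (h₁ : par (a' + C') = par (a + C)) (h₂ : par (d' + F') = par (d + F)) :
    2 * localityExponent k a C a' C' d F d' F' = ((C' * F' - C * F : ℤ) : ℚ) / (k + 2 : ℤ) := by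
  rw [localityExponent, h₁, h₂, sub_self, Int.cast_zero, zero_div, add_zero, ← mul_div_assoc,
    mul_div_mul_left _ _ two_ne_zero, Int.cast_add, Int.cast_ofNat]

theorem semilocality_M0_general {k v z n a c a' c' d f d' f' : ℤ} (hk : Odd k)
    (hv : v ∣ k + 2) (hkv : k + 2 ∣ v ^ 2) (hz : v ^ 2 / (k + 2) ∣ 4 * z ^ 2 - 1)
    (h₁ : P0 k v z n a c a' c') (h₂ : P0 k v z n d f d' f') :
    ∃ m : ℤ, 2 * localityExponent k a (c * ((k + 2) / v)) a' (c' * ((k + 2) / v))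
      d (f * ((k + 2) / v)) d' (f' * ((k + 2) / v)) = m := by
  have hk2 : Odd (k + 2) := hk.add_even even_two
  have hw : Odd ((k + 2) / v) :=
    Int.Odd.of_mul_left (n := v) (by rwa [Int.ediv_mul_cancel hv])
  obtain ⟨m, hm⟩ := (h₁.charge_mul_charge_modEq hv hkv hz h₂).symm.dvd
  have hk2_ne : ((k + 2 : ℤ) : ℚ) ≠ 0 := Int.cast_ne_zero.mpr (by grind)
  refine ⟨m, ?_⟩
  rw [two_mul_localityExponent_of_par_eq k (h₁.par_add_mul_odd hk hw) (h₂.par_add_mul_odd hk hw),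
    hm, Int.cast_mul, mul_div_cancel_left₀ _ hk2_ne]

/-- any two fields appearing in the physical invariant `M⁰[v,z,n]`
(for odd `k`) are mutually semi-local: twice the mutual locality exponent is an integer. -/
theorem semilocality_M0 (k v z n : ℤ) (hk : Odd k) (hkpos : 0 < k)
    (hv1 : v ∣ k + 2) (hv2 : (k + 2) ∣ v ^ 2)
    (hz : (v ^ 2 / (k + 2)) ∣ (4 * z ^ 2 - 1)) (hn : n = 0 ∨ n = 1)
    (a c a' c' d f d' f' : ℤ)
    (ha : 0 ≤ a ∧ a ≤ k) (ha' : 0 ≤ a' ∧ a' ≤ k)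
    (hd : 0 ≤ d ∧ d ≤ k) (hd' : 0 ≤ d' ∧ d' ≤ k)
    (hP1 : P0 k v z n a c a' c') (hP2 : P0 k v z n d f d' f') :
    ∃ m : ℤ,
      2 * ((((c' * ((k + 2) / v)) * (f' * ((k + 2) / v))
              - (c * ((k + 2) / v)) * (f * ((k + 2) / v)) : ℤ) : ℚ) / (2 * ((k : ℚ) + 2))
        + ((par (a + c * ((k + 2) / v)) * par (d + f * ((k + 2) / v))
              - par (a' + c' * ((k + 2) / v)) * par (d' + f' * ((k + 2) / v)) : ℤ) : ℚ) / 4)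
      = (m : ℚ) :=
  semilocality_M0_general hk hv1 hv2 hz hP1 hP2
end

section
/- Let k be a positive integer with 4 ∣ k+2, set k̄ = k+2, and let (v,z,n) satisfy 2v ∣ k̄, k̄ ∣ v², y := k̄(z²−1)/(2v²) ∈ ℤ, and n ∈ {0,1}. Say that a quadruple of integers (a,c,a',c') with a,a' ∈ {0,…,k} satisfies condition P if: a' = J^{an+cy} a (where J^m a = a for m even and k−a for m odd) and c' ≡ cz + a·y·v²/k̄ (mod 2v²/k̄). Then for any two quadruples (a,c,a',c') and (d,f,d',f') satisfying P, the mutual locality exponent μ = (C'·F' − C·F)/(2k̄) + ([a+C][d+F] − [a'+C'][d'+F'])/4, where C = c·k̄/v, C' = c'·k̄/v, F = f·k̄/v, F' = f'·k̄/v, satisfies 2μ ∈ ℤ. -/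
/-- Condition `P` describing the nonzero entries of the physical invariant
`M^{2,0}[v,z,n]` (for `4 ∣ k+2`), where `y = k̄(z²-1)/(2v²)`. -/
def P20 (k v z n a c a' c' : ℤ) : Prop :=
  a' = Jpow k (a * n + c * ((k + 2) * (z ^ 2 - 1) / (2 * v ^ 2))) a ∧
  c' ≡ c * z + a * ((k + 2) * (z ^ 2 - 1) / (2 * v ^ 2)) * (v ^ 2 / (k + 2))
    [ZMOD (2 * v ^ 2 / (k + 2))]

/-!
Put `k̄ = k + 2`, `t = k̄ / v` and `w = v² / k̄`, so that `k̄ = t² w` with `t` even. Since `t` and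
`k` are even, the parities `[a + C]` and `[a' + C']` agree, so the parity term of `μ` vanishes. What
remains is `2μ = t² (c'f' - cf) / k̄ = (c'f' - cf) / w`. Modulo `w`, condition `P` says only
`c' ≡ cz` and `f' ≡ fz`, while integrality of `y` gives `z² ≡ 1`; hence `c'f' ≡ cf`.
-/

/-- The mutual locality exponent `μ` of the fields labelled `(a, C; a', C')` and `(d, F; d', F')` at
level `k`, as a rational number rather than a class modulo `ℤ`. -/
def mutualLocalityExponent (k a C a' C' d F d' F' : ℤ) : ℚ :=
  ((C' * F' - C * F : ℤ) : ℚ) / (2 * ((k : ℚ) + 2))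
    + ((par (a + C) * par (d + F) - par (a' + C') * par (d' + F') : ℤ) : ℚ) / 4

theorem mutualLocalityExponent_eq_of_modEq_two {a C a' C' d F d' F' : ℤ} (k : ℤ)
    (haC : a' + C' ≡ a + C [ZMOD 2]) (hdF : d' + F' ≡ d + F [ZMOD 2]) :
    mutualLocalityExponent k a C a' C' d F d' F' =
      ((C' * F' - C * F : ℤ) : ℚ) / (2 * ((k : ℚ) + 2)) := by
  have hpar : par (a' + C') = par (a + C) := haC
  have hpar' : par (d' + F') = par (d + F) := hdF
  simp [mutualLocalityExponent, hpar, hpar']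

theorem exists_two_mul_mutualLocalityExponent_eq_intCast {k a C a' C' d F d' F' : ℤ}
    (hk : k + 2 ≠ 0) (haC : a' + C' ≡ a + C [ZMOD 2]) (hdF : d' + F' ≡ d + F [ZMOD 2])
    (hdvd : k + 2 ∣ C' * F' - C * F) :
    ∃ m : ℤ, 2 * mutualLocalityExponent k a C a' C' d F d' F' = m := by
  obtain ⟨m, hm⟩ := hdvd
  have hkQ : (k : ℚ) + 2 ≠ 0 := by exact_mod_cast hk
  refine ⟨m, ?_⟩
  rw [mutualLocalityExponent_eq_of_modEq_two k haC hdF, hm]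
  push_cast
  field_simp

theorem jpow_modEq_two {k : ℤ} (hk : Even k) (m a : ℤ) : Jpow k m a ≡ a [ZMOD 2] := by
  obtain ⟨r, rfl⟩ := hk
  unfold Jpow Int.ModEq
  split_ifs <;> omega

theorem mul_modEq_mul_of_sq_modEq_one_s8 {N z c c' f f' : ℤ} (hz : z ^ 2 ≡ 1 [ZMOD N])
    (hc : c' ≡ c * z [ZMOD N]) (hf : f' ≡ f * z [ZMOD N]) : c' * f' ≡ c * f [ZMOD N] :=
  calc
    c' * f' ≡ c * z * (f * z) [ZMOD N] := hc.mul hf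
    _ = c * f * z ^ 2 := by ring
    _ ≡ c * f * 1 [ZMOD N] := hz.mul_left _
    _ = c * f := mul_one _

theorem sq_ediv_mul_sq_ediv {K v : ℤ} (hv : v ∣ K) (hK : K ∣ v ^ 2) :
    (K / v) ^ 2 * (v ^ 2 / K) = K := by
  rcases eq_or_ne v 0 with rfl | hv0
  · obtain rfl : K = 0 := zero_dvd_iff.mp hv
    simp
  · have hKv : K / v * v = K := Int.ediv_mul_cancel hv
    have hvK : v ^ 2 / K * K = v ^ 2 := Int.ediv_mul_cancel hK
    apply mul_right_cancel₀ (pow_ne_zero 2 hv0)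
    calc
      (K / v) ^ 2 * (v ^ 2 / K) * v ^ 2 = (K / v * v) ^ 2 * (v ^ 2 / K) := by ring
      _ = K * (v ^ 2 / K * K) := by rw [hKv]; ring
      _ = K * v ^ 2 := by rw [hvK]

theorem sq_modEq_one_of_sq_dvd_mul {K v z : ℤ} (hK0 : K ≠ 0) (hK : K ∣ v ^ 2)
    (h : v ^ 2 ∣ K * (z ^ 2 - 1)) : z ^ 2 ≡ 1 [ZMOD v ^ 2 / K] := by
  refine (Int.modEq_iff_dvd.mpr ?_).symm
  rwa [← mul_dvd_mul_iff_left hK0, Int.mul_ediv_cancel' hK]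

theorem add_mul_modEq_of_even {t a a' : ℤ} (ht : Even t) (ha : a' ≡ a [ZMOD 2]) (c c' : ℤ) :
    a' + c' * t ≡ a + c * t [ZMOD 2] := by
  have hzero (x : ℤ) : x * t ≡ 0 [ZMOD 2] :=
    Int.modEq_zero_iff_dvd.mpr (ht.mul_left x).two_dvd
  exact ha.add ((hzero c').trans (hzero c).symm)

namespace P20

variable {k v z n a c a' c' : ℤ}

theorem modEq_two (hP : P20 k v z n a c a' c') (hk : Even k) : a' ≡ a [ZMOD 2] :=
  hP.1 ▸ jpow_modEq_two hk _ _

theorem charge_modEq (hP : P20 k v z n a c a' c') (hv : k + 2 ∣ v ^ 2) :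
    c' ≡ c * z [ZMOD v ^ 2 / (k + 2)] := by
  have hmod : v ^ 2 / (k + 2) ∣ 2 * v ^ 2 / (k + 2) := by
    rw [Int.mul_ediv_assoc 2 hv]
    exact dvd_mul_left _ _
  exact (hP.2.of_dvd hmod).trans (by simp [Int.modEq_iff_dvd])

end P20

theorem semilocality_M20_general {k v z a c a' c' d f d' f' : ℤ} (hk : k + 2 ≠ 0)
    (hv1 : 2 * v ∣ k + 2) (hv2 : k + 2 ∣ v ^ 2) (hz : z ^ 2 ≡ 1 [ZMOD v ^ 2 / (k + 2)])
    (ha : a' ≡ a [ZMOD 2]) (hc : c' ≡ c * z [ZMOD v ^ 2 / (k + 2)])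
    (hd : d' ≡ d [ZMOD 2]) (hf : f' ≡ f * z [ZMOD v ^ 2 / (k + 2)]) :
    ∃ m : ℤ, 2 * mutualLocalityExponent k
      a (c * ((k + 2) / v)) a' (c' * ((k + 2) / v))
      d (f * ((k + 2) / v)) d' (f' * ((k + 2) / v)) = m := by
  have ht : Even ((k + 2) / v) :=
    even_iff_two_dvd.mpr (Int.dvd_ediv_of_mul_dvd (mul_comm 2 v ▸ hv1))
  have hlevel : ((k + 2) / v) ^ 2 * (v ^ 2 / (k + 2)) = k + 2 :=
    sq_ediv_mul_sq_ediv (dvd_of_mul_left_dvd hv1) hv2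
  have hcharge : v ^ 2 / (k + 2) ∣ c' * f' - c * f :=
    (mul_modEq_mul_of_sq_modEq_one_s8 hz hc hf).symm.dvd
  refine exists_two_mul_mutualLocalityExponent_eq_intCast hk
    (add_mul_modEq_of_even ht ha c c') (add_mul_modEq_of_even ht hd f f') ?_
  calc
    k + 2 = ((k + 2) / v) ^ 2 * (v ^ 2 / (k + 2)) := hlevel.symm
    _ ∣ ((k + 2) / v) ^ 2 * (c' * f' - c * f) := mul_dvd_mul_left _ hcharge
    _ = c' * ((k + 2) / v) * (f' * ((k + 2) / v)) -
        c * ((k + 2) / v) * (f * ((k + 2) / v)) := by ring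

/-- any two fields appearing in the physical invariant `M^{2,0}[v,z,n]`
(for `4 ∣ k+2`) are mutually semi-local: twice the mutual locality exponent is an integer. -/
theorem semilocality_M20 (k v z n : ℤ) (hk : (4 : ℤ) ∣ k + 2) (hkpos : 0 < k)
    (hv1 : 2 * v ∣ k + 2) (hv2 : (k + 2) ∣ v ^ 2)
    (hy : (2 * v ^ 2) ∣ (k + 2) * (z ^ 2 - 1)) (hn : n = 0 ∨ n = 1)
    (a c a' c' d f d' f' : ℤ)
    (ha : 0 ≤ a ∧ a ≤ k) (ha' : 0 ≤ a' ∧ a' ≤ k)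
    (hd : 0 ≤ d ∧ d ≤ k) (hd' : 0 ≤ d' ∧ d' ≤ k)
    (hP1 : P20 k v z n a c a' c') (hP2 : P20 k v z n d f d' f') :
    ∃ m : ℤ,
      2 * ((((c' * ((k + 2) / v)) * (f' * ((k + 2) / v))
              - (c * ((k + 2) / v)) * (f * ((k + 2) / v)) : ℤ) : ℚ) / (2 * ((k : ℚ) + 2))
        + ((par (a + c * ((k + 2) / v)) * par (d + f * ((k + 2) / v))
              - par (a' + c' * ((k + 2) / v)) * par (d' + f' * ((k + 2) / v)) : ℤ) : ℚ) / 4)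
      = (m : ℚ) := by
  have hk2 : Even k := Int.even_iff.mpr (by omega)
  have hz := sq_modEq_one_of_sq_dvd_mul (by omega) hv2 (dvd_of_mul_left_dvd hy)
  exact semilocality_M20_general (by omega) hv1 hv2 hz
    (hP1.modEq_two hk2) (hP1.charge_modEq hv2) (hP2.modEq_two hk2) (hP2.charge_modEq hv2)
end

section
/- Fix an integer k ≥ 0, set k̄ = k+2, and define 𝐣(a,c) = (k−a, c+k̄) on Q_k. Let M : Q_k × Q_k → ℂ be a matrix such that M_{a,c;a',c'} ≠ 0 implies h_{a,c} − h_{a',c'} ∈ ℤ for all (a,c), (a',c') ∈ Q_k. Then for all m, n ∈ {0,1} and all (a,c), (a',c') ∈ Q_k: M_{𝐣^n(a,c); a',c'}·(−1)^{(a+c+n)m}·exp(2πi·(h_{a,c} − h_{a',c'})) = M_{𝐣^n(a,c); a',c'}·(−1)^{(a+c+n)(m+n)}. -/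
/-- The index set `Q_k = {0,…,k} × ℤ/(2k̄)ℤ` of the level-`k` N=2 minimal model. -/
abbrev Qk (k : ℕ) := Fin (k + 1) × ZMod (2 * (k + 2))

/-- The simple current `𝐣(a,c) = (k-a, c+k̄)` acting on `Q_k`. -/
def jmap (k : ℕ) (p : Qk k) : Qk k :=
  (⟨k - (p.1 : ℕ), Nat.lt_succ_of_le (Nat.sub_le _ _)⟩,
    p.2 + ((k + 2 : ℕ) : ZMod (2 * (k + 2))))

/-!
Write `θ = exp(2πi h)` for the twist of a sector. It is periodic in `c` with period `2k̄`, and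
`h_{a,c} - h_{𝐣(a,c)} = (a + c + 1) / 2`, so `𝐣` multiplies `θ` by `(-1)^(a+c+1)`. As `𝐣` preserves
the parity of `a + c`, these signs accumulate under iteration to `(-1)^((a+c+1)n)`, which is
`(-1)^((a+c+n)n)`. A nonzero entry of `M` at `(𝐣^n p, q)` forces `θ (𝐣^n p) = θ q`, so the `T`-phase
`θ p / θ q` is exactly this sign.
-/

lemma neg_one_pow_add_mul_self {R : Type*} [Monoid R] [HasDistribNeg R] (s n : ℕ) :
    (-1 : R) ^ ((s + n) * n) = (-1) ^ ((s + 1) * n) := by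
  refine neg_one_pow_congr ?_
  simp only [Nat.even_mul, Nat.even_add, Nat.not_even_one]
  tauto

/-- The twist `exp(2πi h_{a,c})`, the eigenvalue of `T` on the sector `(a,c)` up to the central
charge factor. It is defined on integers `c`; `twist_congr` lets it descend to `Q_k`. -/
noncomputable def twist (k : ℕ) (a c : ℤ) : ℂ :=
  Complex.exp (2 * Real.pi * Complex.I * hw k a c)

/-- The twist of an element of `Q_k`, evaluated at the representative of `c` in `[0, 2k̄)`. -/
noncomputable def sectorTwist {k : ℕ} (p : Qk k) : ℂ :=
  twist k (p.1 : ℕ) p.2.val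

section Weight

variable (k : ℕ) (a c : ℤ)

lemma hw_add_mul_period (t : ℤ) :
    hw k a (c + 2 * (k + 2) * t) = hw k a c - (c * t + (k + 2) * t ^ 2 : ℤ) := by
  have hpar : par (a + (c + 2 * (k + 2) * t)) = par (a + c) :=
    Int.modEq_iff_dvd.mpr ⟨-((k + 2) * t), by ring⟩
  have hk : (k : ℝ) + 2 ≠ 0 := by positivity
  simp only [hw, hpar]
  push_cast
  field_simp
  ring

lemma hw_sub_hw_simpleCurrent :
    hw k a c - hw k (k - a) (c + (k + 2)) = (a + c + 1 : ℤ) / 2 := by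
  have hpar : par (k - a + (c + (k + 2))) = par (a + c) :=
    Int.modEq_iff_dvd.mpr ⟨a - k - 1, by ring⟩
  have hk : (k : ℝ) + 2 ≠ 0 := by positivity
  simp only [hw, hpar]
  push_cast
  field_simp
  ring

end Weight

section Twist

variable {k : ℕ} {a b c d : ℤ}

lemma twist_ne_zero : twist k a c ≠ 0 := Complex.exp_ne_zero _

lemma exp_hw_sub_hw :
    Complex.exp (2 * Real.pi * Complex.I * (hw k a c - hw k b d : ℝ)) =
      twist k a c / twist k b d := by
  rw [twist, twist, ← Complex.exp_sub, Complex.ofReal_sub, mul_sub]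

lemma twist_eq_of_hw_sub_eq_intCast {l : ℤ} (h : hw k a c - hw k b d = l) :
    twist k a c = twist k b d := by
  rw [← div_eq_one_iff_eq twist_ne_zero, ← exp_hw_sub_hw, h, Complex.ofReal_intCast, mul_comm,
    Complex.exp_int_mul_two_pi_mul_I]

lemma twist_congr (h : c ≡ d [ZMOD 2 * (k + 2)]) : twist k a c = twist k a d := by
  obtain ⟨t, ht⟩ := h.dvd
  obtain rfl : d = c + 2 * (k + 2) * t := by linarith
  exact twist_eq_of_hw_sub_eq_intCast (by rw [hw_add_mul_period, sub_sub_cancel])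

lemma twist_eq_neg_one_zpow_mul_simpleCurrent :
    twist k a c = (-1) ^ (a + c + 1) * twist k (k - a) (c + (k + 2)) := by
  rw [← div_eq_iff twist_ne_zero, ← exp_hw_sub_hw, hw_sub_hw_simpleCurrent,
    ← Complex.exp_pi_mul_I, ← Complex.exp_int_mul]
  push_cast
  ring_nf

end Twist

section SimpleCurrent

variable {k : ℕ} (p : Qk k)

lemma jmap_fst_coe : (((jmap k p).1 : ℕ) : ℤ) = k - (p.1 : ℕ) :=
  Nat.cast_sub (Nat.le_of_lt_succ p.1.isLt)

lemma jmap_snd_val_modEq :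
    ((jmap k p).2.val : ℤ) ≡ p.2.val + (k + 2) [ZMOD 2 * (k + 2)] := by
  have h : (jmap k p).2.val ≡ p.2.val + (k + 2) [MOD 2 * (k + 2)] := by
    rw [← ZMod.natCast_eq_natCast_iff, Nat.cast_add, ZMod.natCast_zmod_val,
      ZMod.natCast_zmod_val, jmap]
  exact_mod_cast Int.natCast_modEq_iff.mpr h

lemma even_jmap_add_iff :
    Even (((jmap k p).1 : ℕ) + (jmap k p).2.val) ↔ Even ((p.1 : ℕ) + p.2.val) := by
  have hfst := jmap_fst_coe p
  have hsnd : ((jmap k p).2.val : ℤ) ≡ p.2.val + (k + 2) [ZMOD 2] :=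
    (jmap_snd_val_modEq p).of_mul_right _
  rw [Int.ModEq] at hsnd
  rw [Nat.even_iff, Nat.even_iff]
  omega

lemma sectorTwist_eq_neg_one_pow_mul_jmap :
    sectorTwist p = (-1) ^ ((p.1 : ℕ) + p.2.val + 1) * sectorTwist (jmap k p) := by
  rw [sectorTwist, sectorTwist, jmap_fst_coe, twist_congr (jmap_snd_val_modEq p),
    twist_eq_neg_one_zpow_mul_simpleCurrent]
  norm_cast

lemma sectorTwist_eq_neg_one_pow_mul_iterate_jmap (n : ℕ) :
    sectorTwist p =
      (-1) ^ (((p.1 : ℕ) + p.2.val + 1) * n) * sectorTwist ((jmap k)^[n] p) := by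
  induction n generalizing p with
  | zero => simp
  | succ n ih =>
    have hparity : (-1 : ℂ) ^ (((jmap k p).1 : ℕ) + (jmap k p).2.val + 1) =
        (-1) ^ ((p.1 : ℕ) + p.2.val + 1) :=
      neg_one_pow_congr (by simp only [Nat.even_add_one, even_jmap_add_iff])
    rw [sectorTwist_eq_neg_one_pow_mul_jmap, ih (jmap k p), pow_mul, hparity, pow_mul,
      Function.iterate_succ_apply, ← mul_assoc, ← pow_succ']

end SimpleCurrent

theorem T_transform_of_twisted_box_general (k : ℕ) (M : Matrix (Qk k) (Qk k) ℂ)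
    (hM : ∀ p q : Qk k, M p q ≠ 0 →
      ∃ l : ℤ,
        hw k ((p.1 : ℕ) : ℤ) ((p.2.val : ℕ) : ℤ)
          - hw k ((q.1 : ℕ) : ℤ) ((q.2.val : ℕ) : ℤ) = (l : ℝ))
    (m n : ℕ) (p q : Qk k) :
    M ((jmap k)^[n] p) q * (-1 : ℂ) ^ (((p.1 : ℕ) + p.2.val + n) * m) *
        Complex.exp ((2 : ℂ) * (Real.pi : ℂ) * Complex.I *
          ((hw k ((p.1 : ℕ) : ℤ) ((p.2.val : ℕ) : ℤ)
              - hw k ((q.1 : ℕ) : ℤ) ((q.2.val : ℕ) : ℤ) : ℝ) : ℂ))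
      = M ((jmap k)^[n] p) q * (-1 : ℂ) ^ (((p.1 : ℕ) + p.2.val + n) * (m + n)) := by
  obtain hzero | hne := eq_or_ne (M ((jmap k)^[n] p) q) 0
  · simp only [hzero, zero_mul]
  obtain ⟨l, hl⟩ := hM _ _ hne
  have htwist : sectorTwist ((jmap k)^[n] p) = sectorTwist q :=
    twist_eq_of_hw_sub_eq_intCast hl
  have hphase : sectorTwist p / sectorTwist q = (-1) ^ (((p.1 : ℕ) + p.2.val + n) * n) := by
    rw [neg_one_pow_add_mul_self, ← htwist]
    exact (div_eq_iff twist_ne_zero).mpr (sectorTwist_eq_neg_one_pow_mul_iterate_jmap p n)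
  rw [exp_hw_sub_hw, ← sectorTwist, ← sectorTwist, hphase, mul_assoc, ← pow_add, ← mul_add]

/-- if nonzero entries of `M` only couple sectors with integral spin,
then the `T`-phase acting on the `𝐣^n`-twisted, sign-decorated matrix shifts `m` to `m+n`. -/
theorem T_transform_of_twisted_box (k : ℕ) [NeZero (2 * (k + 2))]
    (M : Matrix (Qk k) (Qk k) ℂ)
    (hM : ∀ p q : Qk k, M p q ≠ 0 →
      ∃ l : ℤ,
        hw k ((p.1 : ℕ) : ℤ) ((p.2.val : ℕ) : ℤ)
          - hw k ((q.1 : ℕ) : ℤ) ((q.2.val : ℕ) : ℤ) = (l : ℝ))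
    (m n : ℕ) (hm : m ≤ 1) (hn : n ≤ 1) (p q : Qk k) :
    M ((jmap k)^[n] p) q * (-1 : ℂ) ^ (((p.1 : ℕ) + p.2.val + n) * m) *
        Complex.exp ((2 : ℂ) * (Real.pi : ℂ) * Complex.I *
          ((hw k ((p.1 : ℕ) : ℤ) ((p.2.val : ℕ) : ℤ)
              - hw k ((q.1 : ℕ) : ℤ) ((q.2.val : ℕ) : ℤ) : ℝ) : ℂ))
      = M ((jmap k)^[n] p) q * (-1 : ℂ) ^ (((p.1 : ℕ) + p.2.val + n) * (m + n)) :=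
  T_transform_of_twisted_box_general k M hM m n p q
end

section
/- Let k be an odd positive integer and set k̄ = k+2. Then the number of triples (v,z,n) of integers with 1 ≤ v ≤ k̄, v ∣ k̄, k̄ ∣ v², 1 ≤ z ≤ v²/k̄, (v²/k̄) ∣ (4z²−1), and n ∈ {0,1}, equals d(2k̄), where d(m) denotes the number of positive divisors of m. -/
/-!
Write `N = k̄`, which is odd. A divisor `v` of `N` with `N ∣ v²` amounts to writing `N = m w²` and
`v = m w`, so that `m = v² / N`. Since `2z - 1` and `2z + 1` are coprime with product `4z² - 1`,
the `z` modulo `m` with `m ∣ 4z² - 1` correspond, by the Chinese remainder theorem, to the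
factorizations `m = a b` with `a`, `b` coprime: `a` divides `2z - 1` and `b` divides `2z + 1`.
Finally `(a, b) ↦ (a w, b w)` identifies these with the factorizations `N = d e` with
`gcd d e = w`, or equivalently `lcm d e = v`. Hence the pairs `(v, z)` are counted by the divisors
`d` of `N`, and the factor `2` from `n` turns `d(N)` into `d(2N)`, as `N` is odd.
-/

open Finset

/-- The ordered factorizations `m = a * b` into coprime factors; for `m = 0` there are none. -/
def coprimeFactorizations (m : ℕ) : Finset (ℕ × ℕ) :=
  {p ∈ m.divisorsAntidiagonal | p.1.Coprime p.2}

/-- The solutions of `4 * z ^ 2 ≡ 1` modulo `m`, each residue class being represented in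
`{1, …, m}`, where `4 * z ^ 2 - 1` is not truncated. -/
def fourSqEqOneRoots (m : ℕ) : Finset ℕ :=
  {z ∈ Icc 1 m | m ∣ 4 * z ^ 2 - 1}

/-- The triples `(v, z, n)` labelling the invariants `M⁰[v, z, n]`, with `N` in the role of `k̄`.
They are assembled as a dependent sum over `v`, because the range of `z` depends on `v`, and then
moved to the plain product `ℕ × ℕ × ℕ`. -/
def invariantTriples (N : ℕ) : Finset (ℕ × ℕ × ℕ) :=
  ({v ∈ N.divisors | N ∣ v ^ 2}.sigma fun v => fourSqEqOneRoots (v ^ 2 / N) ×ˢ range 2).map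
    (Equiv.sigmaEquivProd ℕ (ℕ × ℕ)).toEmbedding

section FourSqEqOneRoots

variable {a b m z z' : ℕ}

theorem coprime_two_mul_sub_one_two_mul_add_one (z : ℕ) : (2 * z - 1).Coprime (2 * z + 1) := by
  cases z with
  | zero => simp
  | succ y =>
    change (2 * y + 1).Coprime (2 * y + 1 + 2)
    exact Nat.coprime_self_add_right.2 (Nat.coprime_two_right.2 (odd_two_mul_add_one y))

theorem four_mul_sq_sub_one (z : ℕ) : 4 * z ^ 2 - 1 = (2 * z - 1) * (2 * z + 1) := by
  rw [mul_comm (2 * z - 1), ← Nat.sq_sub_sq (2 * z) 1, mul_pow]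
  rfl

theorem gcd_mul_eq_left_of_dvd_of_dvd {x y : ℕ} (hxy : x.Coprime y) (ha : a ∣ x) (hb : b ∣ y) :
    (a * b).gcd x = a := by
  rw [Nat.Coprime.gcd_mul_right_cancel a (hxy.coprime_dvd_right hb).symm, Nat.gcd_eq_left ha]

theorem gcd_mem_coprimeFactorizations {x y : ℕ} (hm : m ≠ 0) (hxy : x.Coprime y)
    (h : m ∣ x * y) : (m.gcd x, m.gcd y) ∈ coprimeFactorizations m := by
  simp only [coprimeFactorizations, mem_filter, Nat.mem_divisorsAntidiagonal]
  exact ⟨⟨by rw [← hxy.gcd_mul, Nat.gcd_eq_left h], hm⟩,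
    (hxy.coprime_dvd_left (Nat.gcd_dvd_right m x)).coprime_dvd_right (Nat.gcd_dvd_right m y)⟩

theorem exists_mem_Icc_one_modEq (hm : 0 < m) (y : ℕ) : ∃ z ∈ Icc 1 m, z ≡ y [MOD m] := by
  rcases Nat.eq_zero_or_pos (y % m) with hy | hy
  · exact ⟨m, mem_Icc.2 ⟨hm, le_rfl⟩, by simp [Nat.ModEq, hy]⟩
  · exact ⟨y % m, mem_Icc.2 ⟨hy, (Nat.mod_lt y hm).le⟩, Nat.mod_modEq y m⟩

theorem eq_of_modEq_of_mem_Icc_one (hz : z ∈ Icc 1 m) (hz' : z' ∈ Icc 1 m)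
    (h : z ≡ z' [MOD m]) : z = z' := by
  rw [mem_Icc] at hz hz'
  have hsub : z - 1 ≡ z' - 1 [MOD m] := by
    refine Nat.ModEq.add_right_cancel' 1 ?_
    rwa [Nat.sub_add_cancel hz.1, Nat.sub_add_cancel hz'.1]
  have := hsub.eq_of_lt_of_lt (by omega) (by omega)
  omega

theorem exists_mem_Icc_dvd_two_mul_sub_one_dvd_two_mul_add_one (hodd : Odd (a * b))
    (hab : a.Coprime b) : ∃ z ∈ Icc 1 (a * b), a ∣ 2 * z - 1 ∧ b ∣ 2 * z + 1 := by
  obtain ⟨⟨s, hs⟩, ⟨t, ht⟩⟩ := Nat.odd_mul.1 hodd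
  -- `s + 1` and `t` are the residues of `1 / 2` modulo `a` and of `-1 / 2` modulo `b`.
  obtain ⟨y, hya, hyb⟩ := Nat.chineseRemainder hab (s + 1) t
  obtain ⟨z, hz, hzy⟩ := exists_mem_Icc_one_modEq hodd.pos y
  have hza : 2 * z ≡ 1 [MOD a] := calc
    2 * z ≡ 2 * (s + 1) [MOD a] := ((hzy.of_mul_right b).trans hya).mul_left 2
    _ = 1 + a := by omega
    _ ≡ 1 [MOD a] := Nat.add_modEq_right
  have hzb : 2 * z + 1 ≡ 0 [MOD b] := calc
    2 * z + 1 ≡ 2 * t + 1 [MOD b] := (((hzy.of_mul_left a).trans hyb).mul_left 2).add_right 1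
    _ = b := ht.symm
    _ ≡ 0 [MOD b] := Nat.modEq_zero_iff_dvd.2 dvd_rfl
  have hz_pos := (mem_Icc.1 hz).1
  exact ⟨z, hz, (Nat.modEq_iff_dvd' (by omega)).1 hza.symm, Nat.modEq_zero_iff_dvd.1 hzb⟩

theorem eq_of_dvd_two_mul_sub_one_of_dvd_two_mul_add_one (hodd : Odd (a * b))
    (hab : a.Coprime b) (hz : z ∈ Icc 1 (a * b)) (hz' : z' ∈ Icc 1 (a * b))
    (ha : a ∣ 2 * z - 1) (ha' : a ∣ 2 * z' - 1) (hb : b ∣ 2 * z + 1) (hb' : b ∣ 2 * z' + 1) :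
    z = z' := by
  have hz_pos := (mem_Icc.1 hz).1
  have hz_pos' := (mem_Icc.1 hz').1
  have hmod_a : 2 * z ≡ 2 * z' [MOD a] :=
    ((Nat.modEq_iff_dvd' (by omega)).2 ha).symm.trans ((Nat.modEq_iff_dvd' (by omega)).2 ha')
  have hmod_b : 2 * z ≡ 2 * z' [MOD b] :=
    Nat.ModEq.add_right_cancel' 1
      ((Nat.modEq_zero_iff_dvd.2 hb).trans (Nat.modEq_zero_iff_dvd.2 hb').symm)
  have hmod : 2 * z ≡ 2 * z' [MOD a * b] :=
    (Nat.modEq_and_modEq_iff_modEq_mul hab).1 ⟨hmod_a, hmod_b⟩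
  exact eq_of_modEq_of_mem_Icc_one hz hz'
    (hmod.cancel_left_of_coprime (Nat.coprime_two_right.2 hodd))

theorem card_fourSqEqOneRoots (hm : Odd m) :
    #(fourSqEqOneRoots m) = #(coprimeFactorizations m) := by
  refine card_nbij (fun z => (m.gcd (2 * z - 1), m.gcd (2 * z + 1))) ?mapsTo ?injOn ?surjOn
  case mapsTo =>
    intro z hz
    refine gcd_mem_coprimeFactorizations hm.pos.ne' (coprime_two_mul_sub_one_two_mul_add_one z) ?_
    rw [← four_mul_sq_sub_one]
    exact (mem_filter.1 hz).2
  case injOn =>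
    intro z hz z' hz' hgcd
    obtain ⟨hz_mem, hz_dvd⟩ := mem_filter.1 hz
    obtain ⟨hgcd_sub, hgcd_add⟩ := Prod.mk.inj hgcd
    rw [four_mul_sq_sub_one] at hz_dvd
    obtain ⟨hfac, hcop⟩ := mem_filter.1 <| gcd_mem_coprimeFactorizations hm.pos.ne'
      (coprime_two_mul_sub_one_two_mul_add_one z) hz_dvd
    have hmul : m.gcd (2 * z - 1) * m.gcd (2 * z + 1) = m := (Nat.mem_divisorsAntidiagonal.1 hfac).1
    exact eq_of_dvd_two_mul_sub_one_of_dvd_two_mul_add_one (by rwa [hmul]) hcop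
      (by rwa [hmul]) (by rw [hmul]; exact (mem_filter.1 hz').1)
      (Nat.gcd_dvd_right _ _) (hgcd_sub ▸ Nat.gcd_dvd_right _ _)
      (Nat.gcd_dvd_right _ _) (hgcd_add ▸ Nat.gcd_dvd_right _ _)
  case surjOn =>
    rintro ⟨a, b⟩ hp
    obtain ⟨hfac, hab⟩ := mem_filter.1 hp
    obtain ⟨rfl, -⟩ := Nat.mem_divisorsAntidiagonal.1 hfac
    obtain ⟨z, hz, ha, hb⟩ := exists_mem_Icc_dvd_two_mul_sub_one_dvd_two_mul_add_one hm hab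
    have hcop := coprime_two_mul_sub_one_two_mul_add_one z
    refine ⟨z, mem_filter.2 ⟨hz, four_mul_sq_sub_one z ▸ mul_dvd_mul ha hb⟩, Prod.ext ?_ ?_⟩
    · exact gcd_mul_eq_left_of_dvd_of_dvd hcop ha hb
    · exact mul_comm b a ▸ gcd_mul_eq_left_of_dvd_of_dvd hcop.symm hb ha

end FourSqEqOneRoots

section FactorizationsByLcm

variable {N v : ℕ}

theorem card_filter_gcd_eq_divisorsAntidiagonal (m : ℕ) {w : ℕ} (hw : 0 < w) :
    #{p ∈ (m * w ^ 2).divisorsAntidiagonal | p.1.gcd p.2 = w} = #(coprimeFactorizations m) := by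
  symm
  refine card_nbij (fun p => (p.1 * w, p.2 * w)) ?mapsTo ?injOn ?surjOn
  case mapsTo =>
    rintro ⟨a, b⟩ hp
    obtain ⟨hfac, hab⟩ := mem_filter.1 hp
    obtain ⟨rfl, hm⟩ := Nat.mem_divisorsAntidiagonal.1 hfac
    simp only [coe_filter, Set.mem_ofPred_eq, Nat.mem_divisorsAntidiagonal]
    exact ⟨⟨by ring, by positivity⟩, by rw [Nat.gcd_mul_right, hab.gcd_eq_one, one_mul]⟩
  case injOn =>
    rintro ⟨a, b⟩ - ⟨a', b'⟩ - h
    simpa [hw.ne'] using h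
  case surjOn =>
    rintro ⟨d, e⟩ hp
    obtain ⟨hfac, hgcd⟩ := mem_filter.1 hp
    obtain ⟨hde, hm⟩ := Nat.mem_divisorsAntidiagonal.1 hfac
    obtain ⟨a, b, hab, ha, hb⟩ := Nat.exists_coprime d e
    rw [hgcd] at ha hb
    have hmul : a * b = m := Nat.eq_of_mul_eq_mul_right (pow_pos hw 2) <| calc
      a * b * w ^ 2 = d * e := by rw [ha, hb]; ring
      _ = m * w ^ 2 := hde
    exact ⟨(a, b), mem_filter.2 ⟨Nat.mem_divisorsAntidiagonal.2
      ⟨hmul, left_ne_zero_of_mul hm⟩, hab⟩, Prod.ext ha.symm hb.symm⟩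

theorem lcm_eq_iff_gcd_eq {d e v w : ℕ} (hv : 0 < v) (hw : 0 < w) (h : d * e = v * w) :
    d.lcm e = v ↔ d.gcd e = w := by
  have hmul : d.gcd e * d.lcm e = v * w := (Nat.gcd_mul_lcm d e).trans h
  constructor
  · intro hlcm
    exact Nat.eq_of_mul_eq_mul_right hv (by rw [mul_comm w, ← hmul, hlcm])
  · intro hgcd
    exact Nat.eq_of_mul_eq_mul_left hw (by rw [mul_comm w v, ← hmul, hgcd])

theorem exists_eq_mul_sq_of_dvd_of_dvd_sq (hN : 0 < N) (hvN : v ∣ N) (hNv : N ∣ v ^ 2) :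
    ∃ m w, N = m * w ^ 2 ∧ v = m * w := by
  obtain ⟨w, rfl⟩ := hvN
  obtain ⟨m, hm⟩ := hNv
  have hv : v = m * w := Nat.eq_of_mul_eq_mul_left (Nat.pos_of_mul_pos_right hN) (by linarith)
  exact ⟨m, w, by rw [hv]; ring, hv⟩

theorem card_filter_lcm_eq_divisorsAntidiagonal (hN : 0 < N) (hvN : v ∣ N) (hNv : N ∣ v ^ 2) :
    #{p ∈ N.divisorsAntidiagonal | p.1.lcm p.2 = v} = #(coprimeFactorizations (v ^ 2 / N)) := by
  obtain ⟨m, w, rfl, rfl⟩ := exists_eq_mul_sq_of_dvd_of_dvd_sq hN hvN hNv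
  have hm : 0 < m := Nat.pos_of_mul_pos_right hN
  have hw : 0 < w := Nat.pos_of_ne_zero (by rintro rfl; simp at hN)
  have hquot : (m * w) ^ 2 / (m * w ^ 2) = m :=
    Nat.div_eq_of_eq_mul_left hN (by ring)
  rw [hquot, ← card_filter_gcd_eq_divisorsAntidiagonal m hw]
  refine congrArg card (filter_congr fun p hp => lcm_eq_iff_gcd_eq (Nat.mul_pos hm hw) hw ?_)
  rw [(Nat.mem_divisorsAntidiagonal.1 hp).1]
  ring

theorem card_divisorsAntidiagonal (N : ℕ) : #N.divisorsAntidiagonal = #N.divisors := by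
  rw [← Nat.map_div_right_divisors, card_map]

theorem card_divisors_eq_sum_card_coprimeFactorizations (hN : 0 < N) :
    #N.divisors = ∑ v ∈ N.divisors with N ∣ v ^ 2, #(coprimeFactorizations (v ^ 2 / N)) := by
  have hlcm : ∀ p ∈ N.divisorsAntidiagonal, p.1.lcm p.2 ∈ N.divisors.filter (N ∣ · ^ 2) := by
    rintro ⟨d, e⟩ hp
    obtain ⟨rfl, hde⟩ := Nat.mem_divisorsAntidiagonal.1 hp
    rw [mem_filter, Nat.mem_divisors, sq]
    exact ⟨⟨Nat.lcm_dvd_mul d e, hde⟩, mul_dvd_mul (Nat.dvd_lcm_left d e) (Nat.dvd_lcm_right d e)⟩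
  rw [← card_divisorsAntidiagonal, card_eq_sum_card_fiberwise hlcm]
  refine sum_congr rfl fun v hv => ?_
  obtain ⟨hv_dvd, hNv⟩ := mem_filter.1 hv
  exact card_filter_lcm_eq_divisorsAntidiagonal hN (Nat.dvd_of_mem_divisors hv_dvd) hNv

end FactorizationsByLcm

theorem card_divisors_two_mul_of_odd {N : ℕ} (hN : Odd N) :
    #(2 * N).divisors = #N.divisors * 2 := by
  rw [(Nat.coprime_two_left.2 hN).card_divisors_mul, Nat.prime_two.divisors, mul_comm]
  rfl

section InvariantTriples

variable {N v z n : ℕ}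

theorem mem_invariantTriples (hN : 0 < N) :
    (v, z, n) ∈ invariantTriples N ↔
      1 ≤ v ∧ v ≤ N ∧ v ∣ N ∧ N ∣ v ^ 2 ∧
        1 ≤ z ∧ z ≤ v ^ 2 / N ∧ v ^ 2 / N ∣ 4 * z ^ 2 - 1 ∧ n ≤ 1 := by
  have hle : v ∣ N → v ≤ N := Nat.le_of_dvd hN
  have hpos : v ∣ N → 0 < v := (Nat.pos_of_dvd_of_pos · hN)
  simp only [invariantTriples, mem_map_equiv, Equiv.sigmaEquivProd_symm_apply, mem_sigma,
    mem_filter, Nat.mem_divisors, mem_product, mem_Icc, mem_range, fourSqEqOneRoots]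
  grind

theorem odd_sq_div (hN : Odd N) (hvN : v ∣ N) (hNv : N ∣ v ^ 2) : Odd (v ^ 2 / N) :=
  (hN.of_dvd_nat hvN).pow.of_dvd_nat (Nat.div_dvd_of_dvd hNv)

theorem card_invariantTriples (hN : Odd N) : #(invariantTriples N) = #N.divisors * 2 := by
  rw [invariantTriples, card_map, card_sigma,
    card_divisors_eq_sum_card_coprimeFactorizations hN.pos, sum_mul]
  refine sum_congr rfl fun v hv => ?_
  obtain ⟨hv_dvd, hNv⟩ := mem_filter.1 hv
  rw [card_product, card_range,
    card_fourSqEqOneRoots (odd_sq_div hN (Nat.dvd_of_mem_divisors hv_dvd) hNv)]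

end InvariantTriples

/-- for odd `k`, the number of triples `(v,z,n)` parametrising the
physical invariants `M⁰[v,z,n]` equals the number of divisors of `2k̄`. -/
theorem count_M0 (k : ℕ) (hk : Odd k) (hk0 : 0 < k) :
    Nat.card {t : ℕ × ℕ × ℕ //
        1 ≤ t.1 ∧ t.1 ≤ k + 2 ∧ t.1 ∣ (k + 2) ∧ (k + 2) ∣ t.1 ^ 2 ∧
        1 ≤ t.2.1 ∧ t.2.1 ≤ t.1 ^ 2 / (k + 2) ∧
        (t.1 ^ 2 / (k + 2)) ∣ (4 * t.2.1 ^ 2 - 1) ∧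
        t.2.2 ≤ 1}
      = (2 * (k + 2)).divisors.card := by
  have hodd : Odd (k + 2) := hk.add_even even_two
  rw [card_divisors_two_mul_of_odd hodd, ← card_invariantTriples hodd]
  exact Nat.subtype_card _ fun _ => mem_invariantTriples hodd.pos
end

section
/- Let k be a positive integer with 4 ∣ k and set k̄ = k+2. Then the number of triples (v,z,x) of integers with 1 ≤ v ≤ k̄/2, 2v ∣ k̄, k̄ ∣ 2v², 1 ≤ z ≤ 2v²/k̄, (2v²/k̄) ∣ (z²−1), and x ∈ {1,3}, equals d(k̄), where d(m) denotes the number of positive divisors of m. -/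
/-!
Write `k + 2 = 2 * n` with `n` odd. An admissible `v` is the same as a factorization
`n = w ^ 2 * m` with `v = w * m`, and then `2 * v ^ 2 / (k + 2) = m`. Since `m` is odd, a square
root `z` of `1` modulo `m` is the same as a factorization `m = a * b` into coprime factors with
`a ∣ z - 1` and `b ∣ z + 1`. The triples `(w, a, b)` are exactly the factorizations
`n = (w * a) * (w * b)`, with `w` the gcd and `v` the lcm of the two factors, so there are `d(n)`
pairs `(v, z)`. The two values of `x` account for `d(2 * n) = 2 * d(n)`.
-/

open Finset

/-- The square roots of `1` modulo `m`, represented in `{1, …, m}`, so that the truncated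
subtraction `z ^ 2 - 1` is an honest one. -/
def sqrtsOfOne (m : ℕ) : Finset ℕ :=
  {z ∈ Icc 1 m | m ∣ z ^ 2 - 1}

lemma mem_coprimeFactorizations {m : ℕ} {p : ℕ × ℕ} :
    p ∈ coprimeFactorizations m ↔ (p.1 * p.2 = m ∧ m ≠ 0) ∧ p.1.Coprime p.2 := by
  simp only [coprimeFactorizations, mem_filter, Nat.mem_divisorsAntidiagonal]

lemma card_filter_gcd_eq_card_coprimeFactorizations {w : ℕ} (hw : 0 < w) (m : ℕ) :
    #{p ∈ (w ^ 2 * m).divisorsAntidiagonal | p.1.gcd p.2 = w} = #(coprimeFactorizations m) := by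
  symm
  refine card_nbij (fun p ↦ (w * p.1, w * p.2)) ?_ ?_ ?_
  · rintro ⟨a, b⟩ hp
    obtain ⟨⟨rfl, hm⟩, hab⟩ := mem_coprimeFactorizations.1 hp
    refine mem_filter.2 ⟨Nat.mem_divisorsAntidiagonal.2 ⟨by ring, by positivity⟩, ?_⟩
    rw [Nat.gcd_mul_left, hab.gcd_eq_one, mul_one]
  · rintro ⟨a, b⟩ - ⟨a', b'⟩ - h
    simpa [hw.ne'] using h
  · rintro ⟨d, e⟩ hp
    obtain ⟨⟨hde, hn⟩, hgcd⟩ : (d * e = w ^ 2 * m ∧ w ^ 2 * m ≠ 0) ∧ d.gcd e = w := by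
      simpa only [coe_filter, Set.mem_ofPred_eq, Nat.mem_divisorsAntidiagonal] using hp
    obtain ⟨a, b, hab, hd, he⟩ := Nat.exists_coprime d e
    rw [hgcd] at hd he
    subst hd he
    have hm : a * b = m := Nat.eq_of_mul_eq_mul_left (pow_pos hw 2) (by linarith)
    exact ⟨(a, b), mem_coprimeFactorizations.2 ⟨⟨hm, right_ne_zero_of_mul hn⟩, hab⟩,
      by simp only [mul_comm]⟩

lemma exists_eq_sq_mul_of_dvd_of_dvd_sq {n v : ℕ} (hn : n ≠ 0) (hvn : v ∣ n) (hnv : n ∣ v ^ 2) :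
    ∃ w m, n = w ^ 2 * m ∧ v = w * m := by
  obtain ⟨w, rfl⟩ := hvn
  rw [sq] at hnv
  obtain ⟨m, rfl⟩ := Nat.dvd_of_mul_dvd_mul_left (Nat.pos_of_ne_zero (left_ne_zero_of_mul hn)) hnv
  exact ⟨w, m, by ring, rfl⟩

lemma sq_mul_div_sq_mul {w m : ℕ} (h : w ^ 2 * m ≠ 0) : (w * m) ^ 2 / (w ^ 2 * m) = m :=
  Nat.div_eq_of_eq_mul_right (Nat.pos_of_ne_zero h) (by ring)

lemma card_filter_lcm_eq_card_coprimeFactorizations {n v : ℕ} (hn : n ≠ 0) (hvn : v ∣ n)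
    (hnv : n ∣ v ^ 2) :
    #{p ∈ n.divisorsAntidiagonal | p.1.lcm p.2 = v} = #(coprimeFactorizations (v ^ 2 / n)) := by
  obtain ⟨w, m, rfl, rfl⟩ := exists_eq_sq_mul_of_dvd_of_dvd_sq hn hvn hnv
  have hw : 0 < w := by grind
  have hm : 0 < m := by grind
  rw [sq_mul_div_sq_mul hn, ← card_filter_gcd_eq_card_coprimeFactorizations hw]
  congr 1
  refine filter_congr fun p hp ↦ ?_
  have hprod : p.1.gcd p.2 * p.1.lcm p.2 = w * (w * m) := by
    rw [Nat.gcd_mul_lcm, (Nat.mem_divisorsAntidiagonal.1 hp).1]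
    ring
  constructor <;> intro h <;> rw [h] at hprod
  · exact Nat.eq_of_mul_eq_mul_right (by positivity) hprod
  · exact Nat.eq_of_mul_eq_mul_left hw hprod

lemma lcm_mem_filter_divisors_dvd_sq {n : ℕ} {p : ℕ × ℕ} (hp : p ∈ n.divisorsAntidiagonal) :
    p.1.lcm p.2 ∈ {v ∈ n.divisors | n ∣ v ^ 2} := by
  obtain ⟨rfl, hn⟩ := Nat.mem_divisorsAntidiagonal.1 hp
  refine mem_filter.2 ⟨Nat.mem_divisors.2 ⟨Nat.lcm_dvd_mul p.1 p.2, hn⟩, ?_⟩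
  rw [sq]
  exact mul_dvd_mul (Nat.dvd_lcm_left p.1 p.2) (Nat.dvd_lcm_right p.1 p.2)

theorem sum_card_coprimeFactorizations (n : ℕ) :
    ∑ v ∈ n.divisors with n ∣ v ^ 2, #(coprimeFactorizations (v ^ 2 / n)) = #n.divisors := by
  calc ∑ v ∈ n.divisors with n ∣ v ^ 2, #(coprimeFactorizations (v ^ 2 / n))
      = ∑ v ∈ n.divisors with n ∣ v ^ 2, #{p ∈ n.divisorsAntidiagonal | p.1.lcm p.2 = v} := by
        refine sum_congr rfl fun v hv ↦ ?_
        obtain ⟨hv, hnv⟩ := mem_filter.1 hv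
        obtain ⟨hvn, hn⟩ := Nat.mem_divisors.1 hv
        exact (card_filter_lcm_eq_card_coprimeFactorizations hn hvn hnv).symm
    _ = #n.divisorsAntidiagonal :=
        (card_eq_sum_card_fiberwise fun p hp ↦ lcm_mem_filter_divisors_dvd_sq hp).symm
    _ = #n.divisors := by rw [← Nat.map_div_right_divisors, card_map]

lemma mem_sqrtsOfOne {m z : ℕ} : z ∈ sqrtsOfOne m ↔ 1 ≤ z ∧ z ≤ m ∧ m ∣ z ^ 2 - 1 := by
  simp only [sqrtsOfOne, mem_filter, mem_Icc, and_assoc]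

lemma add_one_mem_sqrtsOfOne {m t : ℕ} : t + 1 ∈ sqrtsOfOne m ↔ t < m ∧ m ∣ t * (t + 2) := by
  have hsq : (t + 1) ^ 2 - 1 = t * (t + 2) := Nat.sub_eq_of_eq_add (by ring)
  simp only [mem_sqrtsOfOne, hsq, Nat.succ_le_iff, Nat.succ_pos, true_and]

lemma exists_eq_add_one_of_mem_sqrtsOfOne {m z : ℕ} (hz : z ∈ sqrtsOfOne m) : ∃ t, z = t + 1 :=
  Nat.exists_eq_add_of_le' (mem_sqrtsOfOne.1 hz).1

lemma existsUnique_lt_mul_dvd_dvd_add {a b : ℕ} (hab : a.Coprime b) (ha : a ≠ 0) (hb : b ≠ 0)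
    (c : ℕ) : ∃! t, t < a * b ∧ a ∣ t ∧ b ∣ t + c := by
  -- `(b - 1) * c` stands in for `-c` modulo `b`.
  have hc : (b - 1) * c + c ≡ 0 [MOD b] := by
    rw [← add_one_mul, Nat.sub_one_add_one hb]
    exact Nat.modEq_zero_iff_dvd.2 (dvd_mul_right b c)
  have hiff (t : ℕ) : a ∣ t ∧ b ∣ t + c ↔ t ≡ 0 [MOD a] ∧ t ≡ (b - 1) * c [MOD b] := by
    rw [← Nat.modEq_zero_iff_dvd, ← Nat.modEq_zero_iff_dvd]
    exact and_congr_right' ⟨fun h ↦ (h.trans hc.symm).add_right_cancel' c,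
      fun h ↦ (h.add_right c).trans hc⟩
  simp only [hiff]
  refine ⟨Nat.chineseRemainder hab 0 ((b - 1) * c),
    ⟨Nat.chineseRemainder_lt_mul hab _ _ ha hb, (Nat.chineseRemainder hab _ _).2⟩, ?_⟩
  rintro t ⟨ht, hta, htb⟩
  exact (Nat.chineseRemainder_modEq_unique hab hta htb).eq_of_lt_of_lt ht
    (Nat.chineseRemainder_lt_mul hab _ _ ha hb)

lemma coprime_of_dvd_of_dvd_add_two {a b t : ℕ} (h : Odd a) (ha : a ∣ t) (hb : b ∣ t + 2) :
    a.Coprime b := by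
  have hdvd : a.gcd b ∣ 2 :=
    (Nat.dvd_add_right ((Nat.gcd_dvd_left a b).trans ha)).1 ((Nat.gcd_dvd_right a b).trans hb)
  exact Nat.eq_one_of_dvd_coprimes h.coprime_two_right (Nat.gcd_dvd_left a b) hdvd

lemma existsUnique_coprimeFactorization_of_dvd_mul_add_two {m t : ℕ} (hm : Odd m)
    (h : m ∣ t * (t + 2)) :
    ∃! p, p ∈ coprimeFactorizations m ∧ p.1 ∣ t ∧ p.2 ∣ t + 2 := by
  obtain ⟨a, b, ha, hb, rfl⟩ := exists_dvd_and_dvd_of_dvd_mul h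
  have hao : Odd a := (Nat.odd_mul.1 hm).1
  refine ⟨(a, b), ⟨mem_coprimeFactorizations.2 ⟨⟨rfl, hm.pos.ne'⟩,
    coprime_of_dvd_of_dvd_add_two hao ha hb⟩, ha, hb⟩, ?_⟩
  rintro ⟨a', b'⟩ ⟨hp, ha', hb'⟩
  obtain ⟨⟨hmul, -⟩, -⟩ := mem_coprimeFactorizations.1 hp
  dsimp only at ha' hb' hmul
  have hao' : Odd a' := (Nat.odd_mul.1 (hmul ▸ hm)).1
  have haa' : a' = a := Nat.dvd_antisymm
    ((coprime_of_dvd_of_dvd_add_two hao' ha' hb).dvd_of_dvd_mul_right (Dvd.intro _ hmul))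
    ((coprime_of_dvd_of_dvd_add_two hao ha hb').dvd_of_dvd_mul_right (Dvd.intro _ hmul.symm))
  subst haa'
  rw [Nat.eq_of_mul_eq_mul_left hao.pos hmul]

lemma existsUnique_sqrtsOfOne_of_mem_coprimeFactorizations {m : ℕ} {p : ℕ × ℕ}
    (hp : p ∈ coprimeFactorizations m) :
    ∃! z, z ∈ sqrtsOfOne m ∧ p.1 ∣ z - 1 ∧ p.2 ∣ z + 1 := by
  obtain ⟨⟨rfl, hm⟩, hcop⟩ := mem_coprimeFactorizations.1 hp
  obtain ⟨t, ⟨hlt, ha, hb⟩, huniq⟩ := existsUnique_lt_mul_dvd_dvd_add hcop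
    (left_ne_zero_of_mul hm) (right_ne_zero_of_mul hm) 2
  refine ⟨t + 1, ⟨add_one_mem_sqrtsOfOne.2 ⟨hlt, mul_dvd_mul ha hb⟩, ha, hb⟩, ?_⟩
  rintro z ⟨hz, hza, hzb⟩
  obtain ⟨s, rfl⟩ := exists_eq_add_one_of_mem_sqrtsOfOne hz
  rw [huniq s ⟨(add_one_mem_sqrtsOfOne.1 hz).1, hza, hzb⟩]

theorem card_sqrtsOfOne {m : ℕ} (hm : Odd m) : #(sqrtsOfOne m) = #(coprimeFactorizations m) := by
  have hcount : #(sqrtsOfOne m) * 1 = #(coprimeFactorizations m) * 1 := by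
    refine card_mul_eq_card_mul (fun z p ↦ p.1 ∣ z - 1 ∧ p.2 ∣ z + 1) ?_ ?_
    · intro z hz
      obtain ⟨t, rfl⟩ := exists_eq_add_one_of_mem_sqrtsOfOne hz
      simpa only [card_eq_one_iff_existsUnique, mem_bipartiteAbove] using!
        existsUnique_coprimeFactorization_of_dvd_mul_add_two hm (add_one_mem_sqrtsOfOne.1 hz).2
    · intro p hp
      simpa only [card_eq_one_iff_existsUnique, mem_bipartiteBelow] using
        existsUnique_sqrtsOfOne_of_mem_coprimeFactorizations hp
  simpa only [mul_one] using hcount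

theorem sum_card_sqrtsOfOne {n : ℕ} (hn : Odd n) :
    ∑ v ∈ n.divisors with n ∣ v ^ 2, #(sqrtsOfOne (v ^ 2 / n)) = #n.divisors := by
  rw [← sum_card_coprimeFactorizations n]
  refine sum_congr rfl fun v hv ↦ card_sqrtsOfOne ?_
  obtain ⟨hv, hnv⟩ := mem_filter.1 hv
  have hv_odd : Odd v := hn.of_dvd_nat (Nat.dvd_of_mem_divisors hv)
  exact hv_odd.pow.of_dvd_nat (Nat.div_dvd_of_dvd hnv)

theorem card_divisors_two_mul {n : ℕ} (hn : Odd n) : #(2 * n).divisors = 2 * #n.divisors := by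
  rw [hn.coprime_two_left.card_divisors_mul, Nat.prime_two.divisors, card_pair (by decide)]

/-- for `4 ∣ k`, the number of triples `(v,z,x)` parametrising the
physical invariants `M^{4,2}[v,z,x]` equals `d(k̄)`. -/
theorem count_M42 (k : ℕ) (hk : 4 ∣ k) (hk0 : 0 < k) :
    Nat.card {t : ℕ × ℕ × ℕ //
        1 ≤ t.1 ∧ t.1 ≤ (k + 2) / 2 ∧ 2 * t.1 ∣ (k + 2) ∧ (k + 2) ∣ 2 * t.1 ^ 2 ∧
        1 ≤ t.2.1 ∧ t.2.1 ≤ 2 * t.1 ^ 2 / (k + 2) ∧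
        (2 * t.1 ^ 2 / (k + 2)) ∣ (t.2.1 ^ 2 - 1) ∧
        (t.2.2 = 1 ∨ t.2.2 = 3)}
      = (k + 2).divisors.card := by
  obtain ⟨n, hkn, hn⟩ : ∃ n, k + 2 = 2 * n ∧ Odd n := by
    obtain ⟨j, rfl⟩ := hk
    exact ⟨2 * j + 1, by ring, odd_two_mul_add_one j⟩
  let triples : Finset (Σ _ : ℕ, ℕ × ℕ) :=
    {v ∈ n.divisors | n ∣ v ^ 2}.sigma fun v ↦ sqrtsOfOne (v ^ 2 / n) ×ˢ {1, 3}
  have hcard : #triples = #(2 * n).divisors := by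
    simp only [triples, card_sigma, card_product, card_pair (by decide : (1 : ℕ) ≠ 3)]
    rw [← sum_mul, sum_card_sqrtsOfOne hn, card_divisors_two_mul hn, mul_comm]
  rw [hkn, ← hcard, ← card_map (Equiv.sigmaEquivProd ℕ (ℕ × ℕ)).toEmbedding]
  refine Nat.subtype_card _ fun ⟨v, z, x⟩ ↦ ?_
  have hn0 : n ≠ 0 := hn.pos.ne'
  have hbounds (hv : v ∣ n) : 1 ≤ v ∧ v ≤ n :=
    ⟨Nat.pos_of_dvd_of_pos hv hn.pos, Nat.le_of_dvd hn.pos hv⟩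
  simp only [triples, mem_map_equiv, Equiv.sigmaEquivProd_symm_apply, mem_sigma, mem_filter,
    Nat.mem_divisors, mem_product, mem_sqrtsOfOne, mem_insert, mem_singleton,
    Nat.mul_div_mul_left _ _ two_pos, Nat.mul_div_cancel_left _ two_pos,
    Nat.mul_dvd_mul_iff_left two_pos]
  tauto
end
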